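/- arXiv:2304.02765 — 2 statements merged into one kernel-verified Lean document; each statement's English description precedes it below -/
import Mathlib

section
/- Let A_* > 0 and let α, β : 𝕋 → ℝ be smooth 2π-periodic functions whose Fourier coefficients satisfy J₁'(kA_*)·α̂(k) − i·J₁(kA_*)·β̂(k) = 0 for every k ∈ ℤ \ {0}. Then there exist δ > 0 and a one-parameter family (a(τ), b(τ)), τ ∈ (−δ, δ), of pairs of smooth 2π-periodic real-valued functions, depending smoothly on τ, such that (a(0), b(0)) = (0, 0), (d/dτ)|_{τ=0}(a(τ), b(τ)) = (α, β), and S(a(τ), b(τ)) ≡ 0 for every τ ∈ (−δ, δ), where S(a,b) is the zero-mean function on 𝕋 given by S(a,b)(I) := Σ_{k≠0} (1/k) ( ∫_𝕋 J₁(kA(x)) e^{−ikB(x)} dx ) e^{ikI} with A(x) := A_* + a(x) and B(x) := x + b(x). (The identical vanishing of S(a,b) characterizes the magnetic system on the two-torus determined by (A, B) as being Zoll.) -/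
/-!
Write `r = A_*` and `P_G(A, B) = ∫₀^{2π} sin φ · G (B + A sin φ) dφ`. For every smooth periodic `G`
this function solves the Euler–Poisson–Darboux equation `A² P_AA + A P_A - P = A² P_BB`
(`PT_EPD`), which is linear and self-adjoint for the pairing supplied by Green's formula
(`green_PT`). The functions `J₁ (k A) cos (k B + c)` occurring in `S` are, up to a constant, the
solutions attached to `G = sin (k · + c)` (`PT_sin`).

The Zoll family is written down explicitly. With `A = r e^y` put
`f_s (B, y) = sinh y + s (m cosh y + P_G (r e^y, B))`, again a solution of the equation. For small
`s` its zero set is a graph `y = y_s (B)`. Let `u = P_{L'}`. On that graph, Green's formula makes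
`u · (f_y - A² f_B² / f_y)` the `B`-derivative of a periodic function, so its integral over a
period vanishes (`integral_dens_eq_zero`). The density `ρ = f_y - A² f_B² / f_y` is positive;
taking its normalised primitive as the variable `x` yields functions `A (x)`, `B (x)` for which
every Fourier coefficient of `S` is `N⁻¹ ∫ u ρ dB = 0`, where `N` is the mean of `ρ`. No
Nash–Moser iteration is needed.

At first order in `s`, `a` moves by `-r (m + P_G (r, ·))` and `b` by a primitive of
`-r (P_G)_A (r, ·)`. Matching these with `α` and `β` is a division problem on Fourier
coefficients (`exists_profile`): the hypothesis on `(α, β)` says that the two equations for each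
coefficient of `G` are compatible, and the coefficients decay rapidly because
`J₁² + J₁'²` at `k r` is bounded below by a multiple of `k⁻²` (`bessel_lower`).
-/

open scoped Real BigOperators
open MeasureTheory

noncomputable section

def jb (j : ℤ) : ℝ := max 1 |(j : ℝ)|

def fc (u : ℝ → ℂ) (j : ℤ) : ℂ :=
  (1 / (2 * (π : ℂ))) * ∫ x in (0:ℝ)..(2 * π), u x * Complex.exp (-Complex.I * (j : ℂ) * (x : ℂ))

def fcR (u : ℝ → ℝ) (j : ℤ) : ℂ := fc (fun x => (u x : ℂ)) j

def sobNorm (s : ℝ) (u : ℝ → ℂ) : ℝ :=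
  Real.sqrt (∑' j : ℤ, jb j ^ (2 * s) * ‖fc u j‖ ^ 2)

def memHs (s : ℝ) (u : ℝ → ℂ) : Prop :=
  Summable (fun j : ℤ => jb j ^ (2 * s) * ‖fc u j‖ ^ 2)

def sobNormR (s : ℝ) (u : ℝ → ℝ) : ℝ := sobNorm s (fun x => (u x : ℂ))
def memHsR (s : ℝ) (u : ℝ → ℝ) : Prop := memHs s (fun x => (u x : ℂ))

def pairNorm (s : ℝ) (a b : ℝ → ℝ) : ℝ := sobNormR s a + sobNormR s b

def seqNorm (s : ℝ) (c : ℤ → ℂ) : ℝ :=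
  Real.sqrt (∑' j : ℤ, jb j ^ (2 * s) * ‖c j‖ ^ 2)

def memSeq (s : ℝ) (c : ℤ → ℂ) : Prop :=
  Summable (fun j : ℤ => jb j ^ (2 * s) * ‖c j‖ ^ 2)

def smoothPer (u : ℝ → ℝ) : Prop :=
  ContDiff ℝ (⊤ : ℕ∞) u ∧ Function.Periodic u (2 * π)

def J1 (θ : ℝ) : ℝ :=
  ((1 / (2 * (π : ℂ))) * ∫ φ in (0:ℝ)..(2 * π),
    Complex.exp (Complex.I * (θ : ℂ) * (Real.sin φ : ℂ)) * Complex.exp (-Complex.I * (φ : ℂ))).re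

/-- The action functional S(a,b), via its Fourier expansion in terms of the Bessel function. -/
def Sfun (Astar : ℝ) (a b : ℝ → ℝ) (I : ℝ) : ℂ :=
  ∑' k : ℤ, if k = 0 then 0 else
    (1 / (k : ℂ)) * (∫ x in (0:ℝ)..(2 * π),
        ((J1 ((k : ℝ) * (Astar + a x)) : ℝ) : ℂ) *
          Complex.exp (-Complex.I * (k : ℂ) * ((x + b x : ℝ) : ℂ))) *
      Complex.exp (Complex.I * (k : ℂ) * (I : ℂ))

/-! ### Parameter integrals and a global implicit function theorem -/

/-- Differentiation under the integral sign over a compact interval, for `C¹` integrands on a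
finite-dimensional parameter space (local compactness gives the domination). -/
theorem pint_hasFDerivAt {E F : Type} [NormedAddCommGroup E] [NormedSpace ℝ E]
    [FiniteDimensional ℝ E] [NormedAddCommGroup F] [NormedSpace ℝ F] [CompleteSpace F]
    {h : E × ℝ → F} (hh : ContDiff ℝ 1 h) (a b : ℝ) (e : E) :
    HasFDerivAt (fun e => ∫ t in a..b, h (e, t))
      (∫ t in a..b, (fderiv ℝ h (e, t)).comp (ContinuousLinearMap.inl ℝ E ℝ)) e := by
  have : ProperSpace E := FiniteDimensional.proper ℝ E
  have hc : Continuous h := hh.continuous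
  have hc' : Continuous fun p : E × ℝ =>
      (fderiv ℝ h p).comp (ContinuousLinearMap.inl ℝ E ℝ) :=
    (hh.continuous_fderiv one_ne_zero).clm_comp continuous_const
  obtain ⟨C, hC⟩ := ((isCompact_closedBall e 1).prod (isCompact_uIcc (a := a) (b := b))
    ).exists_bound_of_continuousOn hc'.continuousOn
  refine intervalIntegral.hasFDerivAt_integral_of_dominated_of_fderiv_le
    (F' := fun e t => (fderiv ℝ h (e, t)).comp (ContinuousLinearMap.inl ℝ E ℝ))
    (bound := fun _ => C) (s := Metric.closedBall e 1)
    (Metric.closedBall_mem_nhds e one_pos) ?_ ?_ ?_ ?_ ?_ ?_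
  · exact Filter.Eventually.of_forall fun x =>
      (hc.comp (by fun_prop : Continuous fun t : ℝ => (x, t))).aestronglyMeasurable
  · exact (hc.comp (by fun_prop : Continuous fun t : ℝ => (e, t))).intervalIntegrable _ _
  · exact (hc'.comp (by fun_prop : Continuous fun t : ℝ => (e, t))).aestronglyMeasurable
  · exact Filter.Eventually.of_forall fun t ht x hx =>
      hC (x, t) ⟨hx, Set.uIoc_subset_uIcc ht⟩
  · exact intervalIntegrable_const
  · refine Filter.Eventually.of_forall fun t _ x _ => ?_
    have h1 := (hh.differentiable one_ne_zero (x, t)).hasFDerivAt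
    exact h1.comp x (hasFDerivAt_prodMk_left x t)

theorem pint_contDiff_nat {E : Type} [NormedAddCommGroup E] [NormedSpace ℝ E]
    [FiniteDimensional ℝ E] (a b : ℝ) (n : ℕ) :
    ∀ {F : Type} [NormedAddCommGroup F] [NormedSpace ℝ F] [CompleteSpace F]
    {h : E × ℝ → F} (_ : ContDiff ℝ n h),
    ContDiff ℝ n (fun e => ∫ t in a..b, h (e, t)) := by
  induction n with
  | zero =>
    intro F _ _ _ h hh
    have hc : Continuous h := hh.continuous
    have : Continuous (fun e => ∫ t in a..b, h (e, t)) :=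
      intervalIntegral.continuous_parametric_intervalIntegral_of_continuous'
        (f := fun e t => h (e, t)) (μ := volume) hc a b
    simpa using (contDiff_zero (𝕜 := ℝ)).2 this
  | succ n ih =>
    intro F _ _ _ h hh
    have h1 : ContDiff ℝ 1 h := hh.of_le (by norm_cast; omega)
    have hh' : ContDiff ℝ ((n : WithTop ℕ∞) + 1) h := by exact_mod_cast hh
    have := (contDiff_succ_iff_hasFDerivAt (𝕜 := ℝ) (n := n)
      (f := fun e => ∫ t in a..b, h (e, t))).2
      ⟨_, ih (h := fun p => (fderiv ℝ h p).comp (ContinuousLinearMap.inl ℝ E ℝ)) ?_,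
        fun e => pint_hasFDerivAt h1 a b e⟩
    · exact_mod_cast this
    · exact (hh'.fderiv_right le_rfl).clm_comp contDiff_const

theorem pint_contDiff {E F : Type} [NormedAddCommGroup E] [NormedSpace ℝ E]
    [FiniteDimensional ℝ E] [NormedAddCommGroup F] [NormedSpace ℝ F] [CompleteSpace F]
    {h : E × ℝ → F} (hh : ContDiff ℝ (⊤ : ℕ∞) h) (a b : ℝ) :
    ContDiff ℝ (⊤ : ℕ∞) (fun e => ∫ t in a..b, h (e, t)) :=
  contDiff_infty.2 fun n => pint_contDiff_nat a b n (contDiff_infty.1 hh n)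

theorem pint_deriv {F : Type} [NormedAddCommGroup F] [NormedSpace ℝ F] [CompleteSpace F]
    {h h' : ℝ → ℝ → F} (hh : ContDiff ℝ 1 (fun p : ℝ × ℝ => h p.1 p.2)) (a b e : ℝ)
    (hd : ∀ t, HasDerivAt (fun e => h e t) (h' e t) e) :
    HasDerivAt (fun e => ∫ t in a..b, h e t) (∫ t in a..b, h' e t) e := by
  have h1 := (pint_hasFDerivAt hh a b e).hasDerivAt
  have hc' : Continuous fun p : ℝ × ℝ =>
      (fderiv ℝ (fun p : ℝ × ℝ => h p.1 p.2) p).comp (ContinuousLinearMap.inl ℝ ℝ ℝ) :=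
    (hh.continuous_fderiv one_ne_zero).clm_comp continuous_const
  have hi : IntervalIntegrable (fun t => (fderiv ℝ (fun p : ℝ × ℝ => h p.1 p.2) (e, t)).comp
      (ContinuousLinearMap.inl ℝ ℝ ℝ)) volume a b :=
    (hc'.comp (by fun_prop : Continuous fun t : ℝ => (e, t))).intervalIntegrable _ _
  rw [ContinuousLinearMap.intervalIntegral_apply hi] at h1
  convert h1 using 2
  ext t
  have h2 := ((hh.differentiable one_ne_zero (e, t)).hasFDerivAt.comp e
    (hasFDerivAt_prodMk_left e t)).hasDerivAt
  exact (hd t).unique h2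

/-- Global implicit function theorem in one unknown: if `∂_y F` is bounded below by a positive
constant on each line `{e} × ℝ`, then the zero set of `F` is the graph of a smooth function. -/
theorem global_implicit {E : Type} [NormedAddCommGroup E] [NormedSpace ℝ E] [CompleteSpace E]
    {F : E × ℝ → ℝ} (hF : ContDiff ℝ (⊤ : ℕ∞) F) (Fy : E → ℝ → ℝ)
    (hFy : ∀ e y, HasDerivAt (fun y => F (e, y)) (Fy e y) y)
    (hpos : ∀ e, ∃ c > 0, ∀ y, c ≤ Fy e y) :
    ∃ Y : E → ℝ, ContDiff ℝ (⊤ : ℕ∞) Y ∧ ∀ e y, F (e, y) = 0 ↔ y = Y e := by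
  have hmono : ∀ e, StrictMono fun y => F (e, y) := fun e => by
    obtain ⟨c, hc, hcy⟩ := hpos e
    refine strictMono_of_deriv_pos fun y => ?_
    rw [(hFy e y).deriv]
    exact hc.trans_le (hcy y)
  have hex : ∀ e, ∃ y, F (e, y) = 0 := fun e => by
    obtain ⟨c, hc, hcy⟩ := hpos e
    have hm : Monotone fun y => F (e, y) - c * y := by
      refine monotone_of_deriv_nonneg
        (fun y => ((hFy e y).sub ((hasDerivAt_id y).const_mul c)).differentiableAt) fun y => ?_
      have hd : HasDerivAt (fun y => F (e, y) - c * y) (Fy e y - c * 1) y :=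
        (hFy e y).sub ((hasDerivAt_id y).const_mul c)
      rw [hd.deriv]
      linarith [hcy y]
    have hcont : Continuous fun y => F (e, y) :=
      hF.continuous.comp (by fun_prop)
    set v := F (e, 0) with hv
    have hp : 0 ≤ F (e, |v| / c) := by
      have := hm (show (0 : ℝ) ≤ |v| / c by positivity)
      simp only at this
      rw [mul_div_cancel₀ _ hc.ne'] at this
      linarith [neg_abs_le v]
    have hn : F (e, -(|v| / c)) ≤ 0 := by
      have := hm (show -(|v| / c) ≤ 0 by have : 0 ≤ |v| / c := by positivity
                                         linarith)
      simp only at this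
      rw [mul_neg, mul_div_cancel₀ _ hc.ne'] at this
      linarith [le_abs_self v]
    exact mem_range_of_exists_le_of_exists_ge hcont ⟨_, hn⟩ ⟨_, hp⟩
  choose Y hY using hex
  have hiff : ∀ e y, F (e, y) = 0 ↔ y = Y e := fun e y =>
    ⟨fun h => (hmono e).injective (by rw [h, hY e]), fun h => by rw [h, hY e]⟩
  refine ⟨Y, contDiff_iff_contDiffAt.2 fun e => ?_, hiff⟩
  have hat : ContDiffAt ℝ (⊤ : ℕ∞) F (e, Y e) := hF.contDiffAt
  have hinv : (fderiv ℝ F (e, Y e) ∘L .inr ℝ E ℝ).IsInvertible := by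
    obtain ⟨c, hc, hcy⟩ := hpos e
    have hne : Fy e (Y e) ≠ 0 := (hc.trans_le (hcy _)).ne'
    have h2 := ((hF.differentiable (by simp) (e, Y e)).hasFDerivAt.comp (Y e)
      (hasFDerivAt_prodMk_right e (Y e))).hasDerivAt
    have h3 := (hFy e (Y e)).unique h2
    refine ⟨ContinuousLinearEquiv.unitsEquivAut ℝ (Units.mk0 _ hne), ?_⟩
    ext
    simp [h3]
  have hev := hat.eventually_apply_implicitFunction (by simp) hinv
  have hcd := hat.contDiffAt_implicitFunction (by simp) hinv
  refine hcd.congr_of_eventuallyEq ?_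
  filter_upwards [hev] with x hx
  rw [hY e] at hx
  exact ((hiff _ _).1 hx).symm

/-! ### Solutions of the Euler–Poisson–Darboux equation -/

/-- `PT n G A B = ∫₀^{2π} sinⁿ φ · G (B + A sin φ) dφ`. The case `n = 1` is the solution `P_G` of the
Euler–Poisson–Darboux equation; larger `n` occur as its `A`-derivatives. -/
def PT (n : ℕ) (G : ℝ → ℝ) (A B : ℝ) : ℝ :=
  ∫ φ in (0:ℝ)..(2 * π), Real.sin φ ^ n * G (B + A * Real.sin φ)

theorem smooth_deriv {G : ℝ → ℝ} (hG : ContDiff ℝ (⊤ : ℕ∞) G) :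
    ContDiff ℝ (⊤ : ℕ∞) (deriv G) := (contDiff_infty_iff_deriv.1 hG).2

theorem smooth_hasDerivAt {G : ℝ → ℝ} (hG : ContDiff ℝ (⊤ : ℕ∞) G) (x : ℝ) :
    HasDerivAt G (deriv G x) x := (hG.differentiable (by simp) x).hasDerivAt

theorem periodic_deriv {G : ℝ → ℝ} {T : ℝ} (hG : Function.Periodic G T) :
    Function.Periodic (deriv G) T := fun x => by
  rw [← deriv_comp_add_const, show (fun x => G (x + T)) = G from funext hG]

theorem PT_contDiff (n : ℕ) {G : ℝ → ℝ} (hG : ContDiff ℝ (⊤ : ℕ∞) G) :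
    ContDiff ℝ (⊤ : ℕ∞) (fun p : ℝ × ℝ => PT n G p.1 p.2) := by
  unfold PT
  refine pint_contDiff (h := fun q : (ℝ × ℝ) × ℝ =>
    Real.sin q.2 ^ n * G (q.1.2 + q.1.1 * Real.sin q.2)) ?_ 0 (2 * π)
  have := Real.contDiff_sin (n := ((⊤ : ℕ∞) : WithTop ℕ∞))
  fun_prop

theorem PT_dA (n : ℕ) {G : ℝ → ℝ} (hG : ContDiff ℝ (⊤ : ℕ∞) G) (A B : ℝ) :
    HasDerivAt (fun A => PT n G A B) (PT (n + 1) (deriv G) A B) A := by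
  unfold PT
  have hG1 : ContDiff ℝ 1 G := hG.of_le (by exact_mod_cast le_top)
  refine pint_deriv (h := fun A φ => Real.sin φ ^ n * G (B + A * Real.sin φ))
    (h' := fun A φ => Real.sin φ ^ (n + 1) * deriv G (B + A * Real.sin φ)) ?_ _ _ _ fun t => ?_
  · have := Real.contDiff_sin (n := 1)
    fun_prop
  · have h1 : HasDerivAt (fun A : ℝ => B + A * Real.sin t) (Real.sin t) A := by
      simpa using ((hasDerivAt_id A).mul_const (Real.sin t)).const_add B
    convert! ((smooth_hasDerivAt hG _).comp A h1).const_mul (Real.sin t ^ n) using 1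
    ring

theorem PT_dB (n : ℕ) {G : ℝ → ℝ} (hG : ContDiff ℝ (⊤ : ℕ∞) G) (A B : ℝ) :
    HasDerivAt (fun B => PT n G A B) (PT n (deriv G) A B) B := by
  unfold PT
  have hG1 : ContDiff ℝ 1 G := hG.of_le (by exact_mod_cast le_top)
  refine pint_deriv (h := fun B φ => Real.sin φ ^ n * G (B + A * Real.sin φ))
    (h' := fun B φ => Real.sin φ ^ n * deriv G (B + A * Real.sin φ)) ?_ _ _ _ fun t => ?_
  · have := Real.contDiff_sin (n := 1)
    fun_prop
  · have h1 : HasDerivAt (fun B : ℝ => B + A * Real.sin t) 1 B := by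
      simpa using (hasDerivAt_id B).add_const (A * Real.sin t)
    convert! ((smooth_hasDerivAt hG _).comp B h1).const_mul (Real.sin t ^ n) using 1
    ring

theorem PT_periodic (n : ℕ) {G : ℝ → ℝ} (hG : Function.Periodic G (2 * π)) (A : ℝ) :
    Function.Periodic (PT n G A) (2 * π) := fun B => by
  unfold PT
  congr 1
  ext φ
  rw [show B + 2 * π + A * Real.sin φ = B + A * Real.sin φ + 2 * π by ring, hG]

theorem PT_zero_left (G : ℝ → ℝ) (B : ℝ) : PT 1 G 0 B = 0 := by
  simp [PT]

theorem PT_bound (n : ℕ) {G : ℝ → ℝ} {C : ℝ} (hC : ∀ x, |G x| ≤ C) (A B : ℝ) :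
    |PT n G A B| ≤ C * (2 * π) := by
  have h := intervalIntegral.norm_integral_le_of_norm_le_const (a := 0) (b := 2 * π)
    (f := fun φ => Real.sin φ ^ n * G (B + A * Real.sin φ)) (C := C) fun φ _ => by
      rw [norm_mul, norm_pow]
      have h1 : ‖Real.sin φ‖ ^ n ≤ 1 := pow_le_one₀ (norm_nonneg _) (Real.abs_sin_le_one φ)
      calc _ ≤ 1 * ‖G (B + A * Real.sin φ)‖ := by gcongr
        _ ≤ C := by rw [one_mul]; exact hC _
  simpa [PT, abs_of_pos Real.pi_pos] using h

/-- The Euler–Poisson–Darboux equation `A² P_AA + A P_A - P = A² P_BB`, from integrating a total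
`φ`-derivative over a period. -/
theorem PT_EPD {G : ℝ → ℝ} (hG : ContDiff ℝ (⊤ : ℕ∞) G) (A B : ℝ) :
    A ^ 2 * PT 3 (deriv (deriv G)) A B + A * PT 2 (deriv G) A B - PT 1 G A B
      = A ^ 2 * PT 1 (deriv (deriv G)) A B := by
  have hG' := smooth_deriv hG
  have c0 := hG.continuous
  have c1 := hG'.continuous
  have c2 := (smooth_deriv hG').continuous
  have key : ∀ φ, HasDerivAt (fun φ => Real.cos φ * G (B + A * Real.sin φ)
      - A * (Real.sin φ * Real.cos φ * deriv G (B + A * Real.sin φ)))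
      (A ^ 2 * (Real.sin φ ^ 3 * deriv (deriv G) (B + A * Real.sin φ))
        + A * (Real.sin φ ^ 2 * deriv G (B + A * Real.sin φ))
        - (Real.sin φ ^ 1 * G (B + A * Real.sin φ))
        - A ^ 2 * (Real.sin φ ^ 1 * deriv (deriv G) (B + A * Real.sin φ))) φ := fun φ => by
    have hs := Real.hasDerivAt_sin φ
    have hc := Real.hasDerivAt_cos φ
    have hi : HasDerivAt (fun φ => B + A * Real.sin φ) (A * Real.cos φ) φ :=
      (hs.const_mul A).const_add B
    have h0 := (smooth_hasDerivAt hG (B + A * Real.sin φ)).comp φ hi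
    have h1 := (smooth_hasDerivAt hG' (B + A * Real.sin φ)).comp φ hi
    convert! (hc.mul h0).sub (((hs.mul hc).mul h1).const_mul A) using 1
    simp only [Function.comp_apply, Pi.mul_apply]
    have : Real.cos φ ^ 2 = 1 - Real.sin φ ^ 2 := Real.cos_sq' φ
    linear_combination (A ^ 2 * Real.sin φ * deriv (deriv G) (B + A * Real.sin φ)) * this
  have hInt := intervalIntegral.integral_eq_sub_of_hasDerivAt (a := 0) (b := 2 * π)
    (fun φ _ => key φ) (Continuous.intervalIntegrable (by fun_prop) _ _)
  rw [intervalIntegral.integral_sub, intervalIntegral.integral_sub, intervalIntegral.integral_add,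
    intervalIntegral.integral_const_mul, intervalIntegral.integral_const_mul,
    intervalIntegral.integral_const_mul] at hInt
  · simp only [Real.sin_two_pi, Real.cos_two_pi, Real.sin_zero, Real.cos_zero] at hInt
    simp only [PT]
    linarith
  all_goals exact Continuous.intervalIntegrable (by fun_prop) _ _

/-- Chain rule along a plane curve, in terms of the two partial derivatives. -/
theorem chain2 {Z : ℝ × ℝ → ℝ} {a b : ℝ → ℝ} {a' b' zA zB t : ℝ}
    (hZ : DifferentiableAt ℝ Z (a t, b t))
    (hA : HasDerivAt (fun x => Z (x, b t)) zA (a t)) (hB : HasDerivAt (fun x => Z (a t, x)) zB (b t))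
    (ha : HasDerivAt a a' t) (hb : HasDerivAt b b' t) :
    HasDerivAt (fun t => Z (a t, b t)) (zA * a' + zB * b') t := by
  have h := hZ.hasFDerivAt
  have h1 := (h.comp (a t) (hasFDerivAt_prodMk_left (a t) (b t))).hasDerivAt.unique hA
  have h2 := (h.comp (b t) (hasFDerivAt_prodMk_right (a t) (b t))).hasDerivAt.unique hB
  have h3 := h.comp_hasDerivAt t (ha.prodMk hb)
  convert! h3 using 1
  have : ((a', b') : ℝ × ℝ) = a' • (1, 0) + b' • (0, 1) := by simp
  rw [this, map_add, map_smul, map_smul, ← h1, ← h2]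
  simp [mul_comm]

/-- Green's formula for two solutions `P = P_G` and `u = P_K`: the form
`A (u P_B - P u_B) dA + A (u P_A - P u_A) dB` is exact, with a primitive periodic in `B`. -/
theorem green_PT {G K : ℝ → ℝ} (hG : ContDiff ℝ (⊤ : ℕ∞) G) (hK : ContDiff ℝ (⊤ : ℕ∞) K)
    (pG : Function.Periodic G (2 * π)) (pK : Function.Periodic K (2 * π)) :
    ∃ Z : ℝ × ℝ → ℝ, ContDiff ℝ (⊤ : ℕ∞) Z ∧ (∀ A B, Z (A, B + 2 * π) = Z (A, B)) ∧
      (∀ A B, HasDerivAt (fun x => Z (x, B))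
        (A * (PT 1 K A B * PT 1 (deriv G) A B - PT 1 G A B * PT 1 (deriv K) A B)) A) ∧
      (∀ A B, HasDerivAt (fun x => Z (A, x))
        (A * (PT 1 K A B * PT 2 (deriv G) A B - PT 1 G A B * PT 2 (deriv K) A B)) B) := by
  have hG' := smooth_deriv hG
  have hK' := smooth_deriv hK
  have hG'' := smooth_deriv hG'
  have hK'' := smooth_deriv hK'
  set v : ℝ → ℝ → ℝ := fun A B =>
    A * (PT 1 K A B * PT 1 (deriv G) A B - PT 1 G A B * PT 1 (deriv K) A B) with hv
  have s0 := PT_contDiff 1 hG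
  have s1 := PT_contDiff 1 hK
  have s2 := PT_contDiff 1 hG'
  have s3 := PT_contDiff 1 hK'
  have hvs : ContDiff ℝ (⊤ : ℕ∞) (fun p : ℝ × ℝ => v p.1 p.2) :=
    contDiff_fst.mul ((s1.mul s2).sub (s0.mul s3))
  have hvs1 : ContDiff ℝ 1 (fun p : ℝ × ℝ => v p.1 p.2) :=
    hvs.of_le (by exact_mod_cast le_top)
  have hvc : ∀ B, Continuous fun a => v a B := fun B =>
    hvs.continuous.comp (by fun_prop : Continuous fun a : ℝ => (a, B))
  have hZalt : ∀ A B, A * ∫ t in (0:ℝ)..1, v (A * t) B = ∫ a in (0:ℝ)..A, v a B := fun A B => by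
    have := intervalIntegral.mul_integral_comp_mul_left (f := fun a => v a B) (a := 0) (b := 1) A
    simpa using this
  refine ⟨fun p => p.1 * ∫ t in (0:ℝ)..1, v (p.1 * t) p.2, ?_, ?_, ?_, ?_⟩
  · refine contDiff_fst.mul (pint_contDiff (h := fun q : (ℝ × ℝ) × ℝ => v (q.1.1 * q.2) q.1.2)
      ?_ 0 1)
    exact hvs.comp (by fun_prop : ContDiff ℝ (⊤ : ℕ∞) fun q : (ℝ × ℝ) × ℝ => (q.1.1 * q.2, q.1.2))
  · intro A B
    have : ∀ a, v a (B + 2 * π) = v a B := fun a => by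
      simp only [hv, PT_periodic _ pG a B, PT_periodic _ pK a B,
        PT_periodic _ (periodic_deriv pG) a B, PT_periodic _ (periodic_deriv pK) a B]
    simp only [this]
  · intro A B
    simp only [hZalt]
    exact intervalIntegral.integral_hasDerivAt_right ((hvc B).intervalIntegrable _ _)
      (hvc B).stronglyMeasurable.stronglyMeasurableAtFilter (hvc B).continuousAt
  · intro A B
    simp only [hZalt]
    have h1 := pint_deriv (h := fun B a => v a B)
      (h' := fun B a => a * (PT 1 K a B * PT 1 (deriv (deriv G)) a B
        - PT 1 G a B * PT 1 (deriv (deriv K)) a B))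
      (hvs1.comp (by fun_prop : ContDiff ℝ 1 fun q : ℝ × ℝ => (q.2, q.1))) 0 A B fun a => by
        convert! (((PT_dB 1 hK a B).mul (PT_dB 1 hG' a B)).sub
          ((PT_dB 1 hG a B).mul (PT_dB 1 hK' a B))).const_mul a using 1
        ring
    have h2 : ∀ a, HasDerivAt (fun a => a * (PT 1 K a B * PT 2 (deriv G) a B
        - PT 1 G a B * PT 2 (deriv K) a B))
        (a * (PT 1 K a B * PT 1 (deriv (deriv G)) a B
        - PT 1 G a B * PT 1 (deriv (deriv K)) a B)) a := fun a => by
      convert! (hasDerivAt_id a).mul (((PT_dA 1 hK a B).mul (PT_dA 2 hG' a B)).sub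
          ((PT_dA 1 hG a B).mul (PT_dA 2 hK' a B))) using 1
      simp only [id, Pi.mul_apply, Pi.sub_apply]
      rcases eq_or_ne a 0 with rfl | ha
      · simp [PT_zero_left]
      · apply mul_left_cancel₀ ha
        linear_combination (-PT 1 K a B) * PT_EPD hG a B + PT 1 G a B * PT_EPD hK a B
    have e1 := s0.continuous.comp (by fun_prop : Continuous fun a : ℝ => (a, B))
    have e2 := s1.continuous.comp (by fun_prop : Continuous fun a : ℝ => (a, B))
    have e3 := (PT_contDiff 1 hG'').continuous.comp (by fun_prop : Continuous fun a : ℝ => (a, B))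
    have e4 := (PT_contDiff 1 hK'').continuous.comp (by fun_prop : Continuous fun a : ℝ => (a, B))
    have h3 := intervalIntegral.integral_eq_sub_of_hasDerivAt (a := 0) (b := A)
      (fun a _ => h2 a) (Continuous.intervalIntegrable
        (continuous_id.mul ((e2.mul e3).sub (e1.mul e4))) _ _)
    rw [h3] at h1
    simpa using h1

/-! ### The Bessel function `J₁` -/

theorem integral_comp_sin_mul_cos {g : ℝ → ℝ} (hg : Continuous g) :
    ∫ φ in (0:ℝ)..(2 * π), g (Real.sin φ) * Real.cos φ = 0 := by
  have := intervalIntegral.integral_comp_mul_deriv (a := 0) (b := 2 * π) (f := Real.sin)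
    (f' := Real.cos) (g := g) (fun x _ => Real.hasDerivAt_sin x)
    Real.continuous_cos.continuousOn hg
  simpa using this

/-- The first Bessel function as the solution attached to `sin`, restricted to `B = 0`. -/
theorem J1_eq (θ : ℝ) : J1 θ = (2 * π)⁻¹ * PT 1 Real.sin θ 0 := by
  have h1 : (∫ φ in (0:ℝ)..(2 * π),
      Complex.exp (Complex.I * (θ : ℂ) * (Real.sin φ : ℂ)) * Complex.exp (-Complex.I * (φ : ℂ))).re
      = ∫ φ in (0:ℝ)..(2 * π), Real.cos (θ * Real.sin φ - φ) := by
    have hi : IntervalIntegrable (fun φ : ℝ =>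
      Complex.exp (Complex.I * (θ : ℂ) * (Real.sin φ : ℂ)) * Complex.exp (-Complex.I * (φ : ℂ)))
      volume 0 (2 * π) := Continuous.intervalIntegrable (by fun_prop) _ _
    have := Complex.reCLM.intervalIntegral_comp_comm hi
    simp only [Complex.reCLM_apply] at this
    rw [← this]
    congr 1
    ext φ
    rw [← Complex.exp_add, show Complex.I * (θ : ℂ) * (Real.sin φ : ℂ) + -Complex.I * (φ : ℂ)
      = ((θ * Real.sin φ - φ : ℝ) : ℂ) * Complex.I by push_cast; ring, Complex.exp_ofReal_mul_I_re]
  have h2 : J1 θ = (2 * π)⁻¹ * ∫ φ in (0:ℝ)..(2 * π), Real.cos (θ * Real.sin φ - φ) := by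
    rw [← h1, J1, show (1 / (2 * (π : ℂ))) = (((2 * π)⁻¹ : ℝ) : ℂ) by push_cast; simp,
      Complex.re_ofReal_mul]
  rw [h2]
  congr 1
  simp only [Real.cos_sub]
  rw [intervalIntegral.integral_add, integral_comp_sin_mul_cos (g := fun x => Real.cos (θ * x))
    (by fun_prop), zero_add, PT]
  · congr 1
    ext φ
    simp [mul_comm]
  all_goals exact Continuous.intervalIntegrable (by fun_prop) _ _

theorem integral_odd_sin {g : ℝ → ℝ} (hg : ∀ x, g (-x) = -g x) :
    ∫ φ in (0:ℝ)..(2 * π), g (Real.sin φ) = 0 := by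
  have h := intervalIntegral.integral_comp_sub_left (a := 0) (b := 2 * π)
    (fun φ => g (Real.sin φ)) (2 * π)
  simp only [Real.sin_two_pi_sub, hg, sub_self, sub_zero, intervalIntegral.integral_neg] at h
  linarith

/-- The solutions attached to plane waves are the separated solutions `J₁ (k A) cos (k B + c)`. -/
theorem PT_sin (k c A B : ℝ) :
    PT 1 (fun y => Real.sin (k * y + c)) A B = 2 * π * J1 (k * A) * Real.cos (k * B + c) := by
  have h0 : ∫ φ in (0:ℝ)..(2 * π), Real.sin φ * Real.cos (k * A * Real.sin φ) = 0 :=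
    integral_odd_sin (g := fun x => x * Real.cos (k * A * x)) fun x => by simp
  have hpi : (2 * π) ≠ 0 := by positivity
  rw [J1_eq, ← mul_assoc (2 * π), mul_inv_cancel₀ hpi, one_mul]
  unfold PT
  have : ∀ φ, Real.sin φ ^ 1 * Real.sin (k * (B + A * Real.sin φ) + c)
    = Real.sin (k * B + c) * (Real.sin φ * Real.cos (k * A * Real.sin φ))
      + (Real.sin φ ^ 1 * Real.sin (0 + k * A * Real.sin φ)) * Real.cos (k * B + c) := fun φ => by
    rw [show k * (B + A * Real.sin φ) + c = (k * B + c) + k * A * Real.sin φ by ring, Real.sin_add,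
      zero_add]
    ring
  simp only [this]
  rw [intervalIntegral.integral_add, intervalIntegral.integral_const_mul, h0,
    intervalIntegral.integral_mul_const]
  · ring
  all_goals exact Continuous.intervalIntegrable (by fun_prop) _ _

theorem J1_hasDerivAt (θ : ℝ) : HasDerivAt J1 ((2 * π)⁻¹ * PT 2 Real.cos θ 0) θ := by
  have h := (PT_dA 1 Real.contDiff_sin θ 0).const_mul (2 * π)⁻¹
  rw [Real.deriv_sin] at h
  rwa [show J1 = fun θ => (2 * π)⁻¹ * PT 1 Real.sin θ 0 from funext J1_eq]

theorem deriv_J1 : deriv J1 = fun θ => (2 * π)⁻¹ * PT 2 Real.cos θ 0 :=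
  funext fun θ => (J1_hasDerivAt θ).deriv

theorem deriv_J1_hasDerivAt (θ : ℝ) :
    HasDerivAt (deriv J1) ((2 * π)⁻¹ * PT 3 (deriv Real.cos) θ 0) θ := by
  rw [deriv_J1]
  exact (PT_dA 2 Real.contDiff_cos θ 0).const_mul (2 * π)⁻¹

/-- Bessel's equation of order one, written with the integral formula for `J₁''`. -/
theorem bessel_ode (θ : ℝ) :
    θ ^ 2 * ((2 * π)⁻¹ * PT 3 (deriv Real.cos) θ 0) + θ * deriv J1 θ + (θ ^ 2 - 1) * J1 θ = 0 := by
  have h := PT_EPD Real.contDiff_sin θ 0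
  rw [Real.deriv_sin] at h
  have h2 : PT 1 (deriv Real.cos) θ 0 = - PT 1 Real.sin θ 0 := by
    simp [PT]
  rw [h2] at h
  rw [deriv_J1, J1_eq]
  linear_combination (2 * π)⁻¹ * h

theorem J1_neg (θ : ℝ) : J1 (-θ) = - J1 θ := by
  rw [J1_eq, J1_eq]
  simp [PT]

theorem deriv_J1_neg (θ : ℝ) : deriv J1 (-θ) = deriv J1 θ := by
  rw [deriv_J1]
  simp [PT]

theorem deriv_J1_zero : deriv J1 0 = 1 / 2 := by
  rw [deriv_J1]
  simp [PT, integral_sin_sq]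
  field_simp

/-! ### A lower bound for `J₁² + J₁'²` -/

/-- A monotone energy for Bessel's equation. The factor `exp (-1/θ)` absorbs the term
`2 J₁ J₁'` in the derivative of `θ² (J₁² + J₁'²)`, completing the square `(J₁ + J₁')²`. -/
theorem energy_mono : MonotoneOn
    (fun θ : ℝ => θ ^ 2 * Real.exp (-θ⁻¹) * (J1 θ ^ 2 + deriv J1 θ ^ 2)) (Set.Ioi 0) := by
  set J2 : ℝ → ℝ := fun θ => (2 * π)⁻¹ * PT 3 (deriv Real.cos) θ 0 with hJ2
  have hd : ∀ θ ∈ Set.Ioi (0:ℝ), HasDerivAt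
    (fun θ : ℝ => θ ^ 2 * Real.exp (-θ⁻¹) * (J1 θ ^ 2 + deriv J1 θ ^ 2))
    (Real.exp (-θ⁻¹) * (2 * θ * (J1 θ ^ 2 + deriv J1 θ ^ 2) + (J1 θ ^ 2 + deriv J1 θ ^ 2)
      + θ ^ 2 * (2 * J1 θ * deriv J1 θ + 2 * deriv J1 θ * J2 θ))) θ := by
    intro θ hθ
    have h1 := J1_hasDerivAt θ
    rw [← h1.deriv] at h1
    have h2 : HasDerivAt (deriv J1) (J2 θ) θ := deriv_J1_hasDerivAt θ
    have h3 : HasDerivAt (fun θ : ℝ => Real.exp (-θ⁻¹)) (Real.exp (-θ⁻¹) * (θ ^ 2)⁻¹) θ := by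
      convert! ((hasDerivAt_inv (ne_of_gt hθ)).neg).exp using 1
      simp
    have h4 := ((hasDerivAt_pow 2 θ).mul h3).mul ((h1.pow 2).add (h2.pow 2))
    convert! h4 using 1
    have : θ ≠ 0 := ne_of_gt hθ
    simp only [Pi.mul_apply, Pi.add_apply, Pi.pow_apply]
    push_cast
    field_simp
  refine monotoneOn_of_deriv_nonneg (convex_Ioi 0)
    (fun θ hθ => (hd θ hθ).continuousAt.continuousWithinAt)
    (fun θ hθ => (hd θ (interior_subset hθ)).differentiableAt.differentiableWithinAt)
    fun θ hθ => ?_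
  have hθ := interior_subset hθ
  rw [(hd θ hθ).deriv]
  refine mul_nonneg (Real.exp_pos _).le ?_
  have hb : θ ^ 2 * J2 θ = - θ * deriv J1 θ - (θ ^ 2 - 1) * J1 θ := by
    linear_combination bessel_ode θ
  have h5 : 2 * θ * (J1 θ ^ 2 + deriv J1 θ ^ 2) + (J1 θ ^ 2 + deriv J1 θ ^ 2)
      + θ ^ 2 * (2 * J1 θ * deriv J1 θ + 2 * deriv J1 θ * J2 θ)
      = 2 * θ * J1 θ ^ 2 + (J1 θ + deriv J1 θ) ^ 2 := by
    linear_combination 2 * deriv J1 θ * hb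
  rw [h5]
  have : 0 < θ := hθ
  positivity

/-- Non-degeneracy with quantitative control: `J₁` and `J₁'` have no common zero at the points `k r`,
and `J₁² + J₁'²` decays there no faster than `k⁻²`. -/
theorem bessel_lower {r : ℝ} (hr : 0 < r) :
    ∃ c > 0, ∀ k : ℤ, k ≠ 0 → c ≤ (k : ℝ) ^ 2 * (J1 (k * r) ^ 2 + deriv J1 (k * r) ^ 2) := by
  have hcont : ContinuousAt (deriv J1) 0 := (deriv_J1_hasDerivAt 0).continuousAt
  have hev : ∀ᶠ θ in nhds (0:ℝ), 0 < deriv J1 θ := by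
    apply hcont.eventually (lt_mem_nhds _)
    rw [deriv_J1_zero]; norm_num
  obtain ⟨ε, hε, hball⟩ := Metric.eventually_nhds_iff.1 hev
  set t := min (ε / 2) r with ht
  have ht0 : 0 < t := lt_min (by linarith) hr
  have htr : t ≤ r := min_le_right _ _
  have hpos : 0 < deriv J1 t := hball (by
    rw [Real.dist_eq, sub_zero, abs_of_pos ht0]
    exact (min_le_left _ _).trans_lt (by linarith))
  set D := t ^ 2 * Real.exp (-t⁻¹) * (J1 t ^ 2 + deriv J1 t ^ 2) with hD
  have hD0 : 0 < D := by positivity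
  have main : ∀ m : ℝ, 1 ≤ m → D / r ^ 2 ≤ m ^ 2 * (J1 (m * r) ^ 2 + deriv J1 (m * r) ^ 2) := by
    intro m hm
    have hmr : t ≤ m * r := htr.trans (le_mul_of_one_le_left hr.le hm)
    have h1 : D ≤ (m * r) ^ 2 * Real.exp (-(m * r)⁻¹) * (J1 (m * r) ^ 2 + deriv J1 (m * r) ^ 2) :=
      energy_mono ht0 (ht0.trans_le hmr) hmr
    have h2 : Real.exp (-(m * r)⁻¹) ≤ 1 := Real.exp_le_one_iff.2 (by
      have : 0 < m * r := by positivity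
      have := (inv_pos.2 this).le
      linarith)
    rw [div_le_iff₀ (by positivity)]
    calc D ≤ _ := h1
      _ ≤ (m * r) ^ 2 * 1 * (J1 (m * r) ^ 2 + deriv J1 (m * r) ^ 2) := by gcongr
      _ = _ := by ring
  refine ⟨D / r ^ 2, by positivity, fun k hk => ?_⟩
  rcases lt_or_gt_of_ne hk with h | h
  · have h1 : (1:ℝ) ≤ -(k:ℝ) := by
      have : k + 1 ≤ 0 := h
      have : (k:ℝ) + 1 ≤ 0 := by exact_mod_cast this
      linarith
    have h2 := main _ h1
    rwa [neg_mul, J1_neg, deriv_J1_neg, neg_sq, neg_sq] at h2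
  · exact main _ (by exact_mod_cast h)

/-! ### Fourier coefficients of smooth periodic functions -/

theorem fcR_deriv {u : ℝ → ℝ} (hu : smoothPer u) (k : ℤ) :
    fcR (deriv u) k = Complex.I * k * fcR u k := by
  obtain ⟨hs, hp⟩ := hu
  have c0 := hs.continuous
  have c1 := (smooth_deriv hs).continuous
  have hd : ∀ x : ℝ, HasDerivAt (fun x : ℝ => (u x : ℂ) * Complex.exp (-Complex.I * k * x))
      (((deriv u x : ℝ) : ℂ) * Complex.exp (-Complex.I * k * x)
        + (-Complex.I * k) * ((u x : ℂ) * Complex.exp (-Complex.I * k * x))) x := fun x => by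
    have h1 := (smooth_hasDerivAt hs x).ofReal_comp
    have h2 : HasDerivAt (fun x : ℝ => -Complex.I * k * (x : ℂ)) (-Complex.I * k) x := by
      simpa using (Complex.ofRealCLM.hasDerivAt (x := x)).const_mul (-Complex.I * k)
    convert! h1.mul h2.cexp using 1
    ring
  have h := intervalIntegral.integral_eq_sub_of_hasDerivAt (a := 0) (b := 2 * π)
    (fun x _ => hd x) (Continuous.intervalIntegrable (by fun_prop) _ _)
  rw [intervalIntegral.integral_add, intervalIntegral.integral_const_mul] at h
  · have e1 : Complex.exp (-Complex.I * k * ((2 * π : ℝ) : ℂ)) = 1 := by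
      rw [show -Complex.I * (k : ℂ) * ((2 * π : ℝ) : ℂ) = ((-k : ℤ) : ℂ) * (2 * π * Complex.I) by
        push_cast; ring]
      exact Complex.exp_int_mul_two_pi_mul_I _
    have e2 : u (2 * π) = u 0 := by simpa using hp 0
    rw [e1, e2] at h
    simp only [Complex.ofReal_zero, mul_zero, Complex.exp_zero, sub_self] at h
    simp only [fcR, fc]
    linear_combination (1 / (2 * (π : ℂ))) * h
  all_goals exact Continuous.intervalIntegrable (by fun_prop) _ _

/-- Decay of a sequence faster than any power of `|k|`. At `n = 0` the convention `0 ^ 0 = 1` makes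
the condition bound the term `k = 0` as well. -/
def RapidDecay (g : ℤ → ℂ) : Prop := ∀ n : ℕ, ∃ C : ℝ, ∀ k : ℤ, |(k : ℝ)| ^ n * ‖g k‖ ≤ C

theorem fcR_bound {u : ℝ → ℝ} (hu : smoothPer u) : ∃ C, ∀ k, ‖fcR u k‖ ≤ C := by
  obtain ⟨C, hC⟩ := (isCompact_uIcc (a := (0:ℝ)) (b := 2 * π)).exists_bound_of_continuousOn
    hu.1.continuous.continuousOn
  refine ⟨‖(1 / (2 * (π : ℂ)))‖ * (C * |2 * π - 0|), fun k => ?_⟩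
  simp only [fcR, fc]
  rw [norm_mul]
  gcongr
  refine intervalIntegral.norm_integral_le_of_norm_le_const fun x hx => ?_
  rw [norm_mul, show -Complex.I * (k : ℂ) * (x : ℂ) = ((-k * x : ℝ) : ℂ) * Complex.I by
    push_cast; ring, Complex.norm_exp_ofReal_mul_I, mul_one, Complex.norm_real]
  exact hC x (Set.uIoc_subset_uIcc hx)

theorem smoothPer_deriv {u : ℝ → ℝ} (hu : smoothPer u) : smoothPer (deriv u) :=
  ⟨smooth_deriv hu.1, periodic_deriv hu.2⟩

theorem fcR_rapidDecay {u : ℝ → ℝ} (hu : smoothPer u) : RapidDecay (fcR u) := by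
  intro n
  induction n generalizing u with
  | zero => simpa using fcR_bound hu
  | succ n ih =>
    obtain ⟨C, hC⟩ := ih (smoothPer_deriv hu)
    refine ⟨C, fun k => ?_⟩
    have := hC k
    rw [fcR_deriv hu, norm_mul, norm_mul, Complex.norm_I, one_mul, Complex.norm_intCast] at this
    calc _ = |(k : ℝ)| ^ n * (|(k : ℝ)| * ‖fcR u k‖) := by ring
      _ ≤ C := this

theorem RapidDecay.summable {g : ℤ → ℂ} (hg : RapidDecay g) : Summable fun k => ‖g k‖ := by
  obtain ⟨C, hC⟩ := hg 2
  refine Summable.of_norm_bounded_eventually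
    (((Real.summable_one_div_int_pow (p := 2)).2 one_lt_two).mul_left C) ?_
  have : ∀ᶠ k : ℤ in Filter.cofinite, k ≠ 0 := by
    exact (Set.finite_singleton (0 : ℤ)).eventually_cofinite_notMem
  filter_upwards [this] with k hk
  have hk' : (k : ℝ) ≠ 0 := by exact_mod_cast hk
  have := hC k
  rw [sq_abs] at this
  rw [norm_norm, mul_one_div, le_div_iff₀ (by positivity)]
  linarith

theorem RapidDecay.mul_k {g : ℤ → ℂ} (hg : RapidDecay g) :
    RapidDecay fun k => Complex.I * k * g k := fun n => by
  obtain ⟨C, hC⟩ := hg (n + 1)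
  refine ⟨C, fun k => ?_⟩
  rw [norm_mul, norm_mul, Complex.norm_I, one_mul, Complex.norm_intCast]
  calc _ = |(k : ℝ)| ^ (n + 1) * ‖g k‖ := by ring
    _ ≤ C := hC k

/-- Pointwise Fourier inversion for smooth periodic functions. -/
theorem fcR_hasSum {u : ℝ → ℝ} (hu : smoothPer u) (x : ℝ) :
    HasSum (fun k : ℤ => fcR u k * Complex.exp (Complex.I * k * x)) (u x : ℂ) := by
  have : Fact (0 < 2 * π) := ⟨by positivity⟩
  have hper : Function.Periodic (fun x => (u x : ℂ)) (2 * π) := fun x => by simp only [hu.2 x]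
  have hcont : Continuous (fun x => (u x : ℂ)) := by
    have := hu.1.continuous
    fun_prop
  let f : C(AddCircle (2 * π), ℂ) := ⟨hper.lift, continuous_coinduced_dom.mpr hcont⟩
  have hf : ∀ y : ℝ, f (y : AddCircle (2 * π)) = (u y : ℂ) := fun y => rfl
  have hcoef : ∀ k, fourierCoeff f k = fcR u k := fun k => by
    rw [fourierCoeff_eq_intervalIntegral _ _ 0, zero_add]
    simp only [fcR, fc, hf, fourier_coe_apply, smul_eq_mul]
    rw [Complex.real_smul]
    push_cast
    congr 1
    refine intervalIntegral.integral_congr fun y _ => ?_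
    rw [mul_comm]
    congr 2
    have : (π : ℂ) ≠ 0 := by exact_mod_cast Real.pi_ne_zero
    field_simp
  have hsum : Summable (fourierCoeff f) := by
    rw [show fourierCoeff f = fcR u from funext hcoef]
    exact (fcR_rapidDecay hu).summable.of_norm
  have := has_pointwise_sum_fourier_series_of_summable hsum (x : AddCircle (2 * π))
  rw [hf] at this
  convert! this using 1
  ext k
  rw [hcoef, smul_eq_mul, fourier_coe_apply]
  congr 2
  have : (π : ℂ) ≠ 0 := by exact_mod_cast Real.pi_ne_zero
  push_cast
  field_simp

/-! ### Real trigonometric series -/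

/-- The real part of the Fourier mode `g k · e^{ikx}`. No symmetry of `g` is required, since only real
parts enter. -/
def trig (g : ℤ → ℂ) (k : ℤ) (x : ℝ) : ℝ := (g k * Complex.exp (Complex.I * k * x)).re

/-- The real trigonometric series with coefficients `g`; the junk value of `tsum` is irrelevant for
rapidly decaying `g`. -/
def ser (g : ℤ → ℂ) (x : ℝ) : ℝ := ∑' k, trig g k x

theorem trig_bound (g : ℤ → ℂ) (k : ℤ) (x : ℝ) : ‖trig g k x‖ ≤ ‖g k‖ := by
  refine (Complex.abs_re_le_norm _).trans ?_
  rw [norm_mul, show Complex.I * (k : ℂ) * (x : ℂ) = ((k * x : ℝ) : ℂ) * Complex.I by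
    push_cast; ring, Complex.norm_exp_ofReal_mul_I, mul_one]

theorem trig_hasDerivAt (g : ℤ → ℂ) (k : ℤ) (x : ℝ) :
    HasDerivAt (trig g k) (trig (fun k => Complex.I * k * g k) k x) x := by
  have h2 : HasDerivAt (fun x : ℝ => Complex.I * k * (x : ℂ)) (Complex.I * k) x := by
    simpa using (Complex.ofRealCLM.hasDerivAt (x := x)).const_mul (Complex.I * k)
  have h3 := Complex.reCLM.hasFDerivAt.comp_hasDerivAt x (h2.cexp.const_mul (g k))
  convert! h3 using 1
  simp only [trig, Complex.reCLM_apply]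
  congr 1
  ring

theorem trig_eq (g : ℤ → ℂ) (k : ℤ) (x : ℝ) :
    trig g k x = (g k).re * Real.sin (k * x + π / 2) - (g k).im * Real.sin (k * x + 0) := by
  rw [trig, show Complex.I * (k : ℂ) * (x : ℂ) = ((k * x : ℝ) : ℂ) * Complex.I by push_cast; ring,
    Complex.mul_re, Complex.exp_ofReal_mul_I_re, Complex.exp_ofReal_mul_I_im,
    Real.sin_add_pi_div_two, add_zero]

theorem trig_contDiff (g : ℤ → ℂ) (k : ℤ) : ContDiff ℝ (⊤ : ℕ∞) (trig g k) := by
  rw [show trig g k = _ from funext (trig_eq g k)]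
  have := Real.contDiff_sin (n := ((⊤ : ℕ∞) : WithTop ℕ∞))
  fun_prop

theorem ser_hasDerivAt {g : ℤ → ℂ} (hg : RapidDecay g) (x : ℝ) :
    HasDerivAt (ser g) (ser (fun k => Complex.I * k * g k) x) x :=
  hasDerivAt_tsum (y₀ := 0) hg.mul_k.summable (fun k y => trig_hasDerivAt g k y)
    (fun k y => trig_bound _ k y)
    (Summable.of_norm_bounded hg.summable fun k => trig_bound g k 0) x

theorem ser_deriv {g : ℤ → ℂ} (hg : RapidDecay g) :
    deriv (ser g) = ser (fun k => Complex.I * k * g k) :=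
  funext fun x => (ser_hasDerivAt hg x).deriv

theorem ser_contDiff {g : ℤ → ℂ} (hg : RapidDecay g) : ContDiff ℝ (⊤ : ℕ∞) (ser g) := by
  refine contDiff_infty.2 fun n => ?_
  induction n generalizing g with
  | zero =>
    have : Continuous (ser g) := continuous_iff_continuousAt.2 fun x =>
      (ser_hasDerivAt hg x).continuousAt
    simpa using (contDiff_zero (𝕜 := ℝ)).2 this
  | succ n ih =>
    push_cast
    rw [contDiff_succ_iff_deriv]
    refine ⟨fun x => (ser_hasDerivAt hg x).differentiableAt, by simp, ?_⟩
    rw [ser_deriv hg]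
    exact ih hg.mul_k

theorem ser_periodic (g : ℤ → ℂ) : Function.Periodic (ser g) (2 * π) := fun x => by
  unfold ser
  congr 1
  ext k
  simp only [trig_eq]
  rw [show (k : ℝ) * (x + 2 * π) + π / 2 = k * x + π / 2 + k * (2 * π) by ring,
    show (k : ℝ) * (x + 2 * π) + 0 = k * x + 0 + k * (2 * π) by ring,
    Real.sin_add_int_mul_two_pi, Real.sin_add_int_mul_two_pi]

theorem PT_ser_hasSum {g : ℤ → ℂ} (hg : RapidDecay g) (n : ℕ) (A B : ℝ) :
    HasSum (fun k => PT n (trig g k) A B) (PT n (ser g) A B) := by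
  unfold PT
  refine intervalIntegral.hasSum_integral_of_dominated_convergence (fun k _ => ‖g k‖) ?_ ?_ ?_ ?_ ?_
  · intro k
    have := (trig_contDiff g k).continuous
    exact Continuous.aestronglyMeasurable (by fun_prop)
  · refine fun k => Filter.Eventually.of_forall fun t _ => ?_
    rw [norm_mul, norm_pow]
    have h1 : ‖Real.sin t‖ ^ n ≤ 1 := pow_le_one₀ (norm_nonneg _) (Real.abs_sin_le_one t)
    calc _ ≤ 1 * ‖trig g k (B + A * Real.sin t)‖ := by gcongr
      _ ≤ ‖g k‖ := by rw [one_mul]; exact trig_bound _ _ _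
  · exact Filter.Eventually.of_forall fun t _ => hg.summable
  · exact intervalIntegrable_const
  · refine Filter.Eventually.of_forall fun t _ => HasSum.mul_left _ ?_
    exact (Summable.of_norm_bounded hg.summable fun k => trig_bound g k _).hasSum

theorem PT_trig (g : ℤ → ℂ) (k : ℤ) (A B : ℝ) :
    PT 1 (trig g k) A B
      = ((2 * π * J1 (k * A) : ℝ) * (Complex.I * g k) * Complex.exp (Complex.I * k * B)).re := by
  have h1 := PT_sin k (π / 2) A B
  have h2 := PT_sin k 0 A B
  have h3 : PT 1 (trig g k) A B = (g k).re * PT 1 (fun y => Real.sin (k * y + π / 2)) A B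
      - (g k).im * PT 1 (fun y => Real.sin (k * y + 0)) A B := by
    unfold PT
    rw [← intervalIntegral.integral_const_mul, ← intervalIntegral.integral_const_mul,
      ← intervalIntegral.integral_sub]
    · congr 1
      ext φ
      rw [trig_eq]
      ring
    all_goals exact Continuous.intervalIntegrable (by fun_prop) _ _
  rw [h3, h1, h2, Real.cos_add_pi_div_two, add_zero,
    show Complex.I * (k : ℂ) * (B : ℂ) = ((k * B : ℝ) : ℂ) * Complex.I by push_cast; ring,
    mul_assoc ((2 * π * J1 (k * A) : ℝ) : ℂ), Complex.re_ofReal_mul, Complex.mul_re, Complex.exp_ofReal_mul_I_re,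
    Complex.exp_ofReal_mul_I_im, Complex.I_mul_re, Complex.I_mul_im]
  ring

theorem PT_trig_deriv (g : ℤ → ℂ) (k : ℤ) (A B : ℝ) :
    PT 2 (deriv (trig g k)) A B
      = ((2 * π * (deriv J1 (k * A) * k) : ℝ) * (Complex.I * g k)
          * Complex.exp (Complex.I * k * B)).re := by
  refine (PT_dA 1 (trig_contDiff g k) A B).unique ?_
  simp only [PT_trig]
  have h1 : HasDerivAt (fun A : ℝ => 2 * π * J1 (k * A)) (2 * π * (deriv J1 (k * A) * k)) A := by
    have := J1_hasDerivAt (k * A)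
    rw [← this.deriv] at this
    have h2 : HasDerivAt (fun A : ℝ => (k : ℝ) * A) k A := by
      simpa using (hasDerivAt_id A).const_mul (k : ℝ)
    exact (this.comp A h2).const_mul _
  have h2 := (h1.ofReal_comp.mul_const (Complex.I * g k)).mul_const
    (Complex.exp (Complex.I * k * B))
  exact Complex.reCLM.hasFDerivAt.comp_hasDerivAt A h2

/-! ### The profile of a tangent vector -/

theorem abs_J1_le (θ : ℝ) : |J1 θ| ≤ 1 := by
  rw [J1_eq, abs_mul, abs_of_pos (by positivity)]
  have := PT_bound 1 (G := Real.sin) Real.abs_sin_le_one θ 0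
  rw [inv_mul_le_iff₀ (by positivity)]
  linarith

theorem abs_deriv_J1_le (θ : ℝ) : |deriv J1 θ| ≤ 1 := by
  rw [deriv_J1]
  simp only
  rw [abs_mul, abs_of_pos (by positivity)]
  have := PT_bound 2 (G := Real.cos) Real.abs_cos_le_one θ 0
  rw [inv_mul_le_iff₀ (by positivity)]
  linarith

/-- Solution of the linearised problem: a tangent vector `(α, β)` in the kernel comes from a smooth
periodic profile `G` and a constant `m`, which accounts for the mean of `α`. -/
theorem exists_profile {r : ℝ} (hr : 0 < r) {α β : ℝ → ℝ} (hα : smoothPer α) (hβ : smoothPer β)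
    (hV : ∀ k : ℤ, k ≠ 0 →
      ((deriv J1 ((k : ℝ) * r) : ℝ) : ℂ) * fcR α k
        - Complex.I * ((J1 ((k : ℝ) * r) : ℝ) : ℂ) * fcR β k = 0) :
    ∃ (G : ℝ → ℝ) (m : ℝ), ContDiff ℝ (⊤ : ℕ∞) G ∧ Function.Periodic G (2 * π) ∧
      (∀ B, m + PT 1 G r B = -(α B / r)) ∧ (∀ B, r * PT 2 (deriv G) r B = -deriv β B) := by
  obtain ⟨c, hc, hlow⟩ := bessel_lower hr
  have hE : ∀ k : ℤ, k ≠ 0 → 0 < J1 (k * r) ^ 2 + deriv J1 (k * r) ^ 2 := fun k hk => by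
    have hk' : (k : ℝ) ≠ 0 := by exact_mod_cast hk
    have h1 : 0 < (k : ℝ) ^ 2 := by positivity
    exact (mul_pos_iff_of_pos_left h1).1 (hc.trans_le (hlow k hk))
  have hπ : (π : ℂ) ≠ 0 := by exact_mod_cast Real.pi_ne_zero
  have hrc : (r : ℂ) ≠ 0 := by exact_mod_cast ne_of_gt hr
  -- Each `g k` must satisfy one equation with factor `J₁ (k r)` (from `α`) and one with factor
  -- `J₁' (k r)` (from `β`); this is the least-squares solution, exact by `hV`.
  set g : ℤ → ℂ := fun k => if k = 0 then 0 else
    ((-(2 * π * r * (J1 (k * r) ^ 2 + deriv J1 (k * r) ^ 2))⁻¹ : ℝ) : ℂ) *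
      (fcR β k * (deriv J1 (k * r) : ℝ) - Complex.I * fcR α k * (J1 (k * r) : ℝ)) with hg
  have hgRD : RapidDecay g := fun n => by
    obtain ⟨C1, hC1⟩ := fcR_rapidDecay hα (n + 2)
    obtain ⟨C2, hC2⟩ := fcR_rapidDecay hβ (n + 2)
    have hC0 : 0 ≤ C1 ∧ 0 ≤ C2 :=
      ⟨le_trans (by positivity) (hC1 0), le_trans (by positivity) (hC2 0)⟩
    refine ⟨(2 * π * r * c)⁻¹ * (C2 + C1), fun k => ?_⟩
    rcases eq_or_ne k 0 with rfl | hk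
    · have := hC0.1
      have := hC0.2
      simp only [hg, if_true, norm_zero, mul_zero]
      positivity
    · have hk' : (k : ℝ) ≠ 0 := by exact_mod_cast hk
      simp only [hg, if_neg hk]
      rw [norm_mul, Complex.norm_real, norm_neg, Real.norm_eq_abs,
        abs_of_pos (a := (2 * π * r * (J1 (k * r) ^ 2 + deriv J1 (k * r) ^ 2))⁻¹)
          (inv_pos.2 (mul_pos (by positivity) (hE k hk)))]
      have h1 : ‖fcR β k * (deriv J1 (k * r) : ℝ) - Complex.I * fcR α k * (J1 (k * r) : ℝ)‖
          ≤ ‖fcR β k‖ + ‖fcR α k‖ := by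
        refine (norm_sub_le _ _).trans ?_
        rw [norm_mul, norm_mul, norm_mul, Complex.norm_I, one_mul, Complex.norm_real,
          Complex.norm_real]
        exact add_le_add (mul_le_of_le_one_right (norm_nonneg _) (abs_deriv_J1_le _))
          (mul_le_of_le_one_right (norm_nonneg _) (abs_J1_le _))
      have h2 : (2 * π * r * (J1 (k * r) ^ 2 + deriv J1 (k * r) ^ 2))⁻¹
          ≤ (2 * π * r * c)⁻¹ * |(k : ℝ)| ^ 2 := by
        have hpos : 0 < 2 * π * r * (J1 (k * r) ^ 2 + deriv J1 (k * r) ^ 2) :=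
          mul_pos (by positivity) (hE k hk)
        rw [inv_mul_eq_div, le_div_iff₀ (by positivity), inv_mul_le_iff₀ hpos, sq_abs]
        have := mul_le_mul_of_nonneg_left (hlow k hk) (by positivity : 0 ≤ 2 * π * r)
        linarith
      calc _ ≤ |(k : ℝ)| ^ n * (((2 * π * r * c)⁻¹ * |(k : ℝ)| ^ 2) * (‖fcR β k‖ + ‖fcR α k‖)) := by
            gcongr
        _ = (2 * π * r * c)⁻¹ * (|(k : ℝ)| ^ (n + 2) * ‖fcR β k‖ + |(k : ℝ)| ^ (n + 2) * ‖fcR α k‖)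
            := by ring
        _ ≤ _ := by
          gcongr
          · exact hC2 k
          · exact hC1 k
  have hEc : ∀ k : ℤ, k ≠ 0 →
      ((J1 (k * r) : ℝ) : ℂ) ^ 2 + ((deriv J1 (k * r) : ℝ) : ℂ) ^ 2 ≠ 0 := fun k hk => by
    exact_mod_cast (hE k hk).ne'
  have hgα : ∀ k : ℤ, k ≠ 0 → ((2 * π * J1 (k * r) : ℝ) : ℂ) * (Complex.I * g k)
      = -((r⁻¹ : ℝ) : ℂ) * fcR α k := fun k hk => by
    have h1 := hEc k hk
    simp only [hg, if_neg hk]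
    push_cast
    field_simp
    have hI := Complex.I_sq
    linear_combination ((deriv J1 (k * r) : ℝ) : ℂ) * hV k hk
      + ((J1 (k * r) : ℝ) : ℂ) ^ 2 * fcR α k * hI
  have hgβ : ∀ k : ℤ, ((2 * π * (deriv J1 (k * r) * k) : ℝ) : ℂ) * (Complex.I * g k)
      = -((r⁻¹ : ℝ) : ℂ) * fcR (deriv β) k := fun k => by
    rw [fcR_deriv hβ]
    rcases eq_or_ne k 0 with rfl | hk
    · simp
    have h1 := hEc k hk
    simp only [hg, if_neg hk]
    push_cast
    field_simp
    have hI := Complex.I_sq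
    linear_combination Complex.I * ((J1 (k * r) : ℝ) : ℂ) * hV k hk
      + ((J1 (k * r) : ℝ) : ℂ) ^ 2 * fcR β k * hI
  refine ⟨ser g, -(r⁻¹ * (fcR α 0).re), ser_contDiff hgRD, ser_periodic g, fun B => ?_, fun B => ?_⟩
  · have h1 := PT_ser_hasSum hgRD 1 r B
    have h2 := (Complex.hasSum_re (fcR_hasSum hα B)).mul_left (-r⁻¹)
    have h3 := h2.add (hasSum_ite_eq (0 : ℤ) (r⁻¹ * (fcR α 0).re))
    have h4 : (fun k => PT 1 (trig g k) r B) = fun k =>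
        -r⁻¹ * (fcR α k * Complex.exp (Complex.I * k * B)).re
          + if k = 0 then r⁻¹ * (fcR α 0).re else 0 := funext fun k => by
      rw [PT_trig]
      rcases eq_or_ne k 0 with rfl | hk
      · simp [hg]
      · rw [hgα k hk, if_neg hk, add_zero, ← Complex.re_ofReal_mul]
        push_cast
        ring_nf
    rw [h4] at h1
    have h5 := h1.unique h3
    rw [h5, Complex.ofReal_re]
    ring
  · have h1 := PT_ser_hasSum hgRD.mul_k 2 r B
    have h2 := (Complex.hasSum_re (fcR_hasSum (smoothPer_deriv hβ) B)).mul_left (-r⁻¹)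
    have h4 : (fun k => PT 2 (trig (fun k => Complex.I * k * g k) k) r B) = fun k =>
        -r⁻¹ * (fcR (deriv β) k * Complex.exp (Complex.I * k * B)).re := funext fun k => by
      rw [← show deriv (trig g k) = trig (fun k => Complex.I * k * g k) k from
        funext fun x => (trig_hasDerivAt g k x).deriv, PT_trig_deriv, hgβ,
        ← Complex.re_ofReal_mul]
      push_cast
      ring_nf
    rw [h4, ← ser_deriv hgRD] at h1
    have h5 := h1.unique h2
    rw [h5, Complex.ofReal_re]
    field_simp

/-! ### The level function and its density -/

/-- The level function `f_s (B, y) = sinh y + s (m cosh y + P_G (r e^y, B))`. In the variable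
`A = r e^y` the functions `sinh y` and `cosh y` are the `B`-independent solutions of the
Euler–Poisson–Darboux equation. -/
def Fdef (r m : ℝ) (G : ℝ → ℝ) (s B y : ℝ) : ℝ :=
  Real.sinh y + s * (m * Real.cosh y + PT 1 G (r * Real.exp y) B)

/-- The partial derivative of `Fdef` in `y`. -/
def Fdy (r m : ℝ) (G : ℝ → ℝ) (s B y : ℝ) : ℝ :=
  Real.cosh y + s * (m * Real.sinh y + r * Real.exp y * PT 2 (deriv G) (r * Real.exp y) B)

/-- The partial derivative of `Fdef` in `B`. -/
def FdB (r : ℝ) (G : ℝ → ℝ) (s B y : ℝ) : ℝ := s * PT 1 (deriv G) (r * Real.exp y) B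

/-- The density `ρ = f_y - A² f_B² / f_y`, used on the level curve `f = 0`. It is positive for
small `s` by `dens_lower`. -/
def dens (r m : ℝ) (G : ℝ → ℝ) (s B y : ℝ) : ℝ :=
  Fdy r m G s B y - (r * Real.exp y * FdB r G s B y) ^ 2 / Fdy r m G s B y

theorem rexp_hasDerivAt (r y : ℝ) : HasDerivAt (fun y => r * Real.exp y) (r * Real.exp y) y :=
  (Real.hasDerivAt_exp y).const_mul r

theorem Fdef_dy (r m : ℝ) {G : ℝ → ℝ} (hG : ContDiff ℝ (⊤ : ℕ∞) G) (s B y : ℝ) :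
    HasDerivAt (fun y => Fdef r m G s B y) (Fdy r m G s B y) y := by
  have h1 := (PT_dA 1 hG (r * Real.exp y) B).comp y (rexp_hasDerivAt r y)
  convert! (Real.hasDerivAt_sinh y).add ((((Real.hasDerivAt_cosh y).const_mul m).add h1).const_mul s)
    using 1
  simp only [Fdy]
  ring

theorem Fdef_dB (r m : ℝ) {G : ℝ → ℝ} (hG : ContDiff ℝ (⊤ : ℕ∞) G) (s B y : ℝ) :
    HasDerivAt (fun B => Fdef r m G s B y) (FdB r G s B y) B :=
  (((PT_dB 1 hG (r * Real.exp y) B).const_add _).const_mul s).const_add _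

theorem rexp_le {r : ℝ} (hr : 0 < r) (y : ℝ) : |r * Real.exp y| ≤ 2 * r * Real.cosh y := by
  rw [abs_of_pos (by positivity), Real.cosh_eq]
  nlinarith [Real.exp_pos (-y)]

/-- For small `s` the term `sinh y` dominates, uniformly in `y`, because `r e^y ≤ 2 r cosh y`. -/
theorem Fdy_lower {r m C s : ℝ} {G : ℝ → ℝ} (hr : 0 < r) (hC : ∀ x, |deriv G x| ≤ C)
    (hs : |s| * (|m| + 4 * π * r * C) ≤ 1 / 4) (B y : ℝ) :
    3 / 4 * Real.cosh y ≤ Fdy r m G s B y := by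
  have hcosh := Real.cosh_pos y
  have hC0 : 0 ≤ C := (abs_nonneg _).trans (hC 0)
  have h1 : |Real.sinh y| ≤ Real.cosh y := by
    rw [Real.abs_sinh, ← Real.cosh_abs y]
    exact (Real.sinh_lt_cosh _).le
  have h2 : |s * (m * Real.sinh y + r * Real.exp y * PT 2 (deriv G) (r * Real.exp y) B)|
      ≤ |s| * (|m| * Real.cosh y + 2 * r * Real.cosh y * (C * (2 * π))) := by
    rw [abs_mul]
    gcongr
    refine (abs_add_le _ _).trans ?_
    rw [abs_mul, abs_mul]
    gcongr
    · exact rexp_le hr y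
    · exact PT_bound 2 hC _ _
  have h3 : |s| * (|m| * Real.cosh y + 2 * r * Real.cosh y * (C * (2 * π)))
      ≤ 1 / 4 * Real.cosh y := by
    calc _ = |s| * (|m| + 4 * π * r * C) * Real.cosh y := by ring
      _ ≤ _ := by gcongr
  have h4 := (abs_le.1 (h2.trans h3)).1
  unfold Fdy
  linarith

theorem FdB_bound {r m C s : ℝ} {G : ℝ → ℝ} (hr : 0 < r) (hC : ∀ x, |deriv G x| ≤ C)
    (hs : |s| * (|m| + 4 * π * r * C) ≤ 1 / 4) (B y : ℝ) :
    |r * Real.exp y * FdB r G s B y| ≤ 1 / 4 * Real.cosh y := by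
  have hcosh := Real.cosh_pos y
  have hC0 : 0 ≤ C := (abs_nonneg _).trans (hC 0)
  unfold FdB
  rw [abs_mul, abs_mul s]
  calc _ ≤ 2 * r * Real.cosh y * (|s| * (C * (2 * π))) := by
        gcongr
        · exact rexp_le hr y
        · exact PT_bound 1 hC _ _
    _ = |s| * (4 * π * r * C) * Real.cosh y := by ring
    _ ≤ |s| * (|m| + 4 * π * r * C) * Real.cosh y := by
        gcongr
        linarith [abs_nonneg m]
    _ ≤ _ := by gcongr

theorem Fdy_pos {r m C s : ℝ} {G : ℝ → ℝ} (hr : 0 < r) (hC : ∀ x, |deriv G x| ≤ C)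
    (hs : |s| * (|m| + 4 * π * r * C) ≤ 1 / 4) (B y : ℝ) : 0 < Fdy r m G s B y :=
  lt_of_lt_of_le (by have := Real.cosh_pos y; positivity) (Fdy_lower hr hC hs B y)

theorem dens_lower {r m C s : ℝ} {G : ℝ → ℝ} (hr : 0 < r) (hC : ∀ x, |deriv G x| ≤ C)
    (hs : |s| * (|m| + 4 * π * r * C) ≤ 1 / 4) (B y : ℝ) : 1 / 2 ≤ dens r m G s B y := by
  have h1 := Fdy_lower hr hC hs B y
  have h2 := sq_le_sq' (abs_le.1 (FdB_bound hr hC hs B y)).1 (abs_le.1 (FdB_bound hr hC hs B y)).2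
  have h3 := Fdy_pos hr hC hs B y
  have h4 := Real.one_le_cosh y
  unfold dens
  have h5 : (r * Real.exp y * FdB r G s B y) ^ 2 / Fdy r m G s B y ≤ 1 / 4 * Real.cosh y := by
    rw [div_le_iff₀ h3]
    nlinarith
  linarith

theorem rexp_contDiff (r : ℝ) : ContDiff ℝ (⊤ : ℕ∞) (fun y => r * Real.exp y) :=
  contDiff_const.mul Real.contDiff_exp

section smooth
variable {E : Type} [NormedAddCommGroup E] [NormedSpace ℝ E] {s B y : E → ℝ}

theorem PT_comp_contDiff (r : ℝ) (n : ℕ) {G : ℝ → ℝ} (hG : ContDiff ℝ (⊤ : ℕ∞) G)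
    (hB : ContDiff ℝ (⊤ : ℕ∞) B) (hy : ContDiff ℝ (⊤ : ℕ∞) y) :
    ContDiff ℝ (⊤ : ℕ∞) fun e => PT n G (r * Real.exp (y e)) (B e) :=
  (PT_contDiff n hG).comp (((rexp_contDiff r).comp hy).prodMk hB)

theorem Fdef_contDiff (r m : ℝ) {G : ℝ → ℝ} (hG : ContDiff ℝ (⊤ : ℕ∞) G)
    (hs : ContDiff ℝ (⊤ : ℕ∞) s) (hB : ContDiff ℝ (⊤ : ℕ∞) B) (hy : ContDiff ℝ (⊤ : ℕ∞) y) :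
    ContDiff ℝ (⊤ : ℕ∞) fun e => Fdef r m G (s e) (B e) (y e) :=
  (Real.contDiff_sinh.comp hy).add (hs.mul ((contDiff_const.mul (Real.contDiff_cosh.comp hy)).add
    (PT_comp_contDiff r 1 hG hB hy)))

theorem Fdy_contDiff (r m : ℝ) {G : ℝ → ℝ} (hG : ContDiff ℝ (⊤ : ℕ∞) G)
    (hs : ContDiff ℝ (⊤ : ℕ∞) s) (hB : ContDiff ℝ (⊤ : ℕ∞) B) (hy : ContDiff ℝ (⊤ : ℕ∞) y) :
    ContDiff ℝ (⊤ : ℕ∞) fun e => Fdy r m G (s e) (B e) (y e) :=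
  (Real.contDiff_cosh.comp hy).add (hs.mul ((contDiff_const.mul (Real.contDiff_sinh.comp hy)).add
    (((rexp_contDiff r).comp hy).mul (PT_comp_contDiff r 2 (smooth_deriv hG) hB hy))))

theorem dens_contDiff (r m : ℝ) {G : ℝ → ℝ} (hG : ContDiff ℝ (⊤ : ℕ∞) G)
    (hs : ContDiff ℝ (⊤ : ℕ∞) s) (hB : ContDiff ℝ (⊤ : ℕ∞) B) (hy : ContDiff ℝ (⊤ : ℕ∞) y)
    (hne : ∀ e, Fdy r m G (s e) (B e) (y e) ≠ 0) :
    ContDiff ℝ (⊤ : ℕ∞) fun e => dens r m G (s e) (B e) (y e) :=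
  (Fdy_contDiff r m hG hs hB hy).sub
    (((((rexp_contDiff r).comp hy).mul
      (hs.mul (PT_comp_contDiff r 1 (smooth_deriv hG) hB hy))).pow 2).div
      (Fdy_contDiff r m hG hs hB hy) hne)

end smooth

/-! ### Orthogonality along the level curve -/

/-- On the level curve `y = y (B)`, every solution `P_{L'}` integrates to zero against the density.
The integrand is the derivative of a periodic function: `green_PT` handles the pair `(G, L')`, and
the pairing of `L'` with the `B`-independent part of `f` has an explicit primitive built from
`P_L`. -/
theorem integral_dens_eq_zero (r m : ℝ) {G L : ℝ → ℝ} (hG : ContDiff ℝ (⊤ : ℕ∞) G)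
    (hL : ContDiff ℝ (⊤ : ℕ∞) L) (pG : Function.Periodic G (2 * π))
    (pL : Function.Periodic L (2 * π)) (s : ℝ) {y : ℝ → ℝ} (hy : ContDiff ℝ (⊤ : ℕ∞) y)
    (py : Function.Periodic y (2 * π)) (hF : ∀ B, Fdef r m G s B (y B) = 0)
    (hne : ∀ B, Fdy r m G s B (y B) ≠ 0) :
    ∫ B in (0:ℝ)..(2 * π), PT 1 (deriv L) (r * Real.exp (y B)) B * dens r m G s B (y B) = 0 := by
  have hL' := smooth_deriv hL
  obtain ⟨Z, hZ, pZ, hZA, hZB⟩ := green_PT hG hL' pG (periodic_deriv pL)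
  have hyd : ∀ B, HasDerivAt y (-(FdB r G s B (y B) / Fdy r m G s B (y B))) B := fun B => by
    have h1 := smooth_hasDerivAt hy B
    have h2 := chain2 (Z := fun p => Fdef r m G s p.1 p.2) (a := fun t => t) (b := y) (t := B)
      (((Fdef_contDiff r m hG (contDiff_const (c := s)) contDiff_fst contDiff_snd).differentiable
        (by simp)) _)
      (Fdef_dB r m hG s B (y B)) (Fdef_dy r m hG s B (y B)) (hasDerivAt_id B) h1
    have h3 : (fun t => Fdef r m G s t (y t)) = fun _ => 0 := funext hF
    simp only [h3] at h2
    have h4 := h2.unique (hasDerivAt_const B (0 : ℝ))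
    convert! h1 using 1
    have := hne B
    field_simp
    linarith
  set A : ℝ → ℝ := fun B => r * Real.exp (y B) with hA
  have hAd : ∀ B, HasDerivAt A (A B * -(FdB r G s B (y B) / Fdy r m G s B (y B))) B := fun B =>
    (rexp_hasDerivAt r (y B)).comp B (hyd B)
  have hPT : ∀ (n : ℕ) {H : ℝ → ℝ} (_ : ContDiff ℝ (⊤ : ℕ∞) H) (B : ℝ),
      HasDerivAt (fun t => PT n H (A t) t) (PT (n + 1) (deriv H) (A B) B
        * (A B * -(FdB r G s B (y B) / Fdy r m G s B (y B))) + PT n (deriv H) (A B) B * 1) B :=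
    fun n H hH B => chain2 (Z := fun p => PT n H p.1 p.2) (a := A) (b := fun t => t)
      ((PT_contDiff n hH).differentiable (by simp) _) (PT_dA n hH _ _) (PT_dB n hH _ _) (hAd B)
      (hasDerivAt_id B)
  have hZd : ∀ B, HasDerivAt (fun t => Z (A t, t)) _ B := fun B =>
    chain2 (Z := Z) (a := A) (b := fun t => t) (hZ.differentiable (by simp) _)
      (hZA _ _) (hZB _ _) (hAd B) (hasDerivAt_id B)
  have hcosh : ∀ B, HasDerivAt (fun t => Real.cosh (y t)) _ B := fun B =>
    (Real.hasDerivAt_cosh (y B)).comp B (hyd B)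
  have hsinh : ∀ B, HasDerivAt (fun t => Real.sinh (y t)) _ B := fun B =>
    (Real.hasDerivAt_sinh (y B)).comp B (hyd B)
  set Φ : ℝ → ℝ := fun t => PT 1 L (A t) t * (Real.cosh (y t) + s * m * Real.sinh (y t))
    - (Real.sinh (y t) + s * m * Real.cosh (y t)) * (A t * PT 2 (deriv L) (A t) t)
    + s * Z (A t, t) with hΦ
  have hΦd : ∀ B, HasDerivAt Φ (PT 1 (deriv L) (A B) B * dens r m G s B (y B)) B := fun B => by
    have h := (((hPT 1 hL B).mul ((hcosh B).add ((hsinh B).const_mul (s * m)))).sub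
      (((hsinh B).add ((hcosh B).const_mul (s * m))).mul ((hAd B).mul (hPT 2 hL' B)))).add
      ((hZd B).const_mul s)
    convert! h using 1
    have e1 := PT_EPD hL (A B) B
    have e2 := hF B
    have e3 := hne B
    have e4 : FdB r G s B (y B) / Fdy r m G s B (y B) * Fdy r m G s B (y B) = FdB r G s B (y B) :=
      div_mul_cancel₀ _ e3
    have e5 : (r * Real.exp (y B) * FdB r G s B (y B)) ^ 2 / Fdy r m G s B (y B)
      = A B ^ 2 * FdB r G s B (y B) * (FdB r G s B (y B) / Fdy r m G s B (y B)) := by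
      simp only [hA]; ring
    simp only [dens, e5]
    generalize FdB r G s B (y B) / Fdy r m G s B (y B) = q at *
    simp only [Fdy, FdB, Fdef] at *
    rw [show r * Real.exp (y B) = A B from rfl] at *
    simp only [Pi.add_apply, Pi.mul_apply]
    -- Only the equation for `P_L` and the vanishing of `f` on the curve are used; `q = -y'`.
    linear_combination (q * (Real.sinh (y B) + s * m * Real.cosh (y B))) * (-e1)
      + (A B * PT 2 (deriv (deriv L)) (A B) B - A B ^ 2 * q * PT 1 (deriv (deriv L)) (A B) B) * e2
  have hcont : Continuous fun B => PT 1 (deriv L) (A B) B * dens r m G s B (y B) :=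
    ((PT_comp_contDiff r 1 hL' contDiff_id hy).mul
      (dens_contDiff r m hG contDiff_const contDiff_id hy hne)).continuous
  rw [intervalIntegral.integral_eq_sub_of_hasDerivAt (fun B _ => hΦd B)
    (hcont.intervalIntegrable _ _)]
  have hy0 : y (2 * π) = y 0 := by simpa using py 0
  have hA0 : A (2 * π) = A 0 := by simp only [hA, hy0]
  have hZ0 : Z (A 0, 2 * π) = Z (A 0, 0) := by simpa using pZ (A 0) 0
  have hL0 : PT 1 L (A 0) (2 * π) = PT 1 L (A 0) 0 := by simpa using PT_periodic 1 pL (A 0) 0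
  have hL1 : PT 2 (deriv L) (A 0) (2 * π) = PT 2 (deriv L) (A 0) 0 := by
    simpa using PT_periodic 2 (periodic_deriv pL) (A 0) 0
  simp only [hΦ, hy0, hA0, hZ0, hL0, hL1, sub_self]

/-! ### Reparametrisation of the circle -/

/-- A positive periodic density `R (τ, ·)`, divided by its mean `N τ`, has a primitive `X` that is
a lift of a circle diffeomorphism; its inverse `V` is jointly smooth in `(τ, x)`. The function `κ`
fixes the constant of integration. -/
theorem circle_inverse {R : ℝ × ℝ → ℝ} (hR : ContDiff ℝ (⊤ : ℕ∞) R)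
    (pR : ∀ τ B, R (τ, B + 2 * π) = R (τ, B)) {c : ℝ} (hc : 0 < c) (hRc : ∀ p, c ≤ R p)
    {κ : ℝ → ℝ} (hκ : ContDiff ℝ (⊤ : ℕ∞) κ) {N : ℝ → ℝ}
    (hN : N = fun τ => (2 * π)⁻¹ * ∫ t in (0:ℝ)..(2 * π), R (τ, t)) {X : ℝ × ℝ → ℝ}
    (hX : X = fun p => κ p.1 + (N p.1)⁻¹ * ∫ t in (0:ℝ)..p.2, R (p.1, t)) :
    (∀ τ, 0 < N τ) ∧ ContDiff ℝ (⊤ : ℕ∞) X ∧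
      (∀ τ B, HasDerivAt (fun B => X (τ, B)) (R (τ, B) / N τ) B) ∧
      (∀ τ B, X (τ, B + 2 * π) = X (τ, B) + 2 * π) ∧
      ∃ V : ℝ × ℝ → ℝ, ContDiff ℝ (⊤ : ℕ∞) V ∧ ∀ τ x B, X (τ, B) = x ↔ B = V (τ, x) := by
  have hRτ : ∀ τ, Continuous fun t => R (τ, t) := fun τ => hR.continuous.comp (by fun_prop)
  have hNpos : ∀ τ, 0 < N τ := fun τ => by
    have : c * (2 * π) ≤ ∫ t in (0:ℝ)..(2 * π), R (τ, t) := by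
      have := intervalIntegral.integral_mono_on (μ := volume) (a := 0) (b := 2 * π) (f := fun _ => c)
        (g := fun t => R (τ, t)) (by positivity) (continuous_const.intervalIntegrable _ _)
        ((hRτ τ).intervalIntegrable _ _) (fun t _ => hRc _)
      simpa [mul_comm] using this
    rw [hN]
    have h0 : 0 < c * (2 * π) := by positivity
    have := h0.trans_le this
    positivity
  have hNs : ContDiff ℝ (⊤ : ℕ∞) N := by
    rw [hN]
    exact contDiff_const.mul (pint_contDiff (h := R) hR 0 (2 * π))
  have hIs : ContDiff ℝ (⊤ : ℕ∞) fun p : ℝ × ℝ => ∫ t in (0:ℝ)..p.2, R (p.1, t) := by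
    have : (fun p : ℝ × ℝ => ∫ t in (0:ℝ)..p.2, R (p.1, t))
        = fun p : ℝ × ℝ => p.2 * ∫ t in (0:ℝ)..1, R (p.1, p.2 * t) := by
      ext p
      have := intervalIntegral.mul_integral_comp_mul_left (f := fun t => R (p.1, t))
        (a := 0) (b := 1) p.2
      simpa using this.symm
    rw [this]
    refine contDiff_snd.mul (pint_contDiff (h := fun q : (ℝ × ℝ) × ℝ => R (q.1.1, q.1.2 * q.2))
      ?_ 0 1)
    exact hR.comp (by fun_prop : ContDiff ℝ (⊤ : ℕ∞) fun q : (ℝ × ℝ) × ℝ => (q.1.1, q.1.2 * q.2))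
  have hXs : ContDiff ℝ (⊤ : ℕ∞) X := by
    rw [hX]
    exact (hκ.comp contDiff_fst).add (((hNs.inv fun τ => (hNpos τ).ne').comp contDiff_fst).mul hIs)
  have hXd : ∀ τ B, HasDerivAt (fun B => X (τ, B)) (R (τ, B) / N τ) B := fun τ B => by
    rw [hX, div_eq_inv_mul]
    show HasDerivAt (fun B => κ τ + (N τ)⁻¹ * ∫ t in (0:ℝ)..B, R (τ, t)) _ B
    exact ((intervalIntegral.integral_hasDerivAt_right ((hRτ τ).intervalIntegrable _ _)
      (hRτ τ).stronglyMeasurable.stronglyMeasurableAtFilter (hRτ τ).continuousAt).const_mul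
      _).const_add _
  refine ⟨hNpos, hXs, hXd, fun τ B => ?_, ?_⟩
  · have h1 : ∫ t in (0:ℝ)..(B + 2 * π), R (τ, t)
        = (∫ t in (0:ℝ)..B, R (τ, t)) + ∫ t in (0:ℝ)..(2 * π), R (τ, t) := by
      rw [← intervalIntegral.integral_add_adjacent_intervals (b := B)
        ((hRτ τ).intervalIntegrable _ _) ((hRτ τ).intervalIntegrable _ _)]
      congr 1
      have := Function.Periodic.intervalIntegral_add_eq (f := fun t => R (τ, t)) (pR τ) B 0
      simpa using this
    have h2 : ∫ t in (0:ℝ)..(2 * π), R (τ, t) = 2 * π * N τ := by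
      rw [hN]
      field_simp
    have := (hNpos τ).ne'
    simp only [hX, h1, h2]
    field_simp
    ring
  · obtain ⟨V, hV, hVX⟩ := global_implicit (E := ℝ × ℝ)
      (F := fun q => X (q.1.1, q.2) - q.1.2)
      ((hXs.comp (by fun_prop : ContDiff ℝ (⊤ : ℕ∞) fun q : (ℝ × ℝ) × ℝ => (q.1.1, q.2))).sub
        (contDiff_fst.snd))
      (fun e B => R (e.1, B) / N e.1) (fun e B => (hXd e.1 B).sub_const e.2)
      (fun e => ⟨c / N e.1, div_pos hc (hNpos _), fun B =>
        div_le_div_of_nonneg_right (hRc _) (hNpos _).le⟩)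
    exact ⟨V, hV, fun τ x B => by rw [← hVX (τ, x) B, sub_eq_zero]⟩

/-- Change of variables `x = X (B)` in an integral over a period. -/
theorem integral_comp_inverse {X V R g : ℝ → ℝ} {N : ℝ}
    (hXd : ∀ B, HasDerivAt X (R B / N) B) (hXp : ∀ B, X (B + 2 * π) = X B + 2 * π)
    (hXV : ∀ x B, X B = x ↔ B = V x) (hV : Continuous V) (hR : Continuous R)
    (pR : Function.Periodic R (2 * π)) (hg : Continuous g) (pg : Function.Periodic g (2 * π)) :
    ∫ x in (0:ℝ)..(2 * π), g (V x) = N⁻¹ * ∫ B in (0:ℝ)..(2 * π), g B * R B := by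
  have h0 : X (V 0) = 0 := (hXV _ _).2 rfl
  have hVX : ∀ B, V (X B) = B := fun B => ((hXV _ _).1 rfl).symm
  have h := intervalIntegral.integral_comp_mul_deriv (a := V 0) (b := V 0 + 2 * π) (f := X)
    (f' := fun B => R B / N) (g := fun x => g (V x)) (fun B _ => hXd B) (by fun_prop) (by fun_prop)
  rw [hXp, h0, zero_add] at h
  rw [← h]
  simp only [Function.comp_apply, hVX]
  have pgR : Function.Periodic (fun B => g B * R B) (2 * π) := pg.mul pR
  have h2 := pgR.intervalIntegral_add_eq (V 0) 0
  rw [zero_add] at h2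
  rw [← h2, ← intervalIntegral.integral_const_mul]
  congr 1
  ext B
  ring

/-! ### Vanishing of the action functional -/

theorem exists_bound_of_periodic {H : ℝ → ℝ} (hH : Continuous H) {T : ℝ} (hT : 0 < T)
    (pH : Function.Periodic H T) : ∃ C, ∀ x, |H x| ≤ C := by
  obtain ⟨C, hC⟩ := (isCompact_Icc (a := (0 : ℝ)) (b := T)).exists_bound_of_continuousOn
    hH.continuousOn
  refine ⟨C, fun x => ?_⟩
  obtain ⟨z, hz, hxz⟩ := pH.exists_mem_Ico₀ hT x
  rw [hxz]
  exact hC z ⟨hz.1, hz.2.le⟩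

/-- Orthogonality to all real phase shifts gives vanishing of the complex integral; the phases
`0` and `π / 2` are enough. -/
theorem integral_cexp_eq_zero {J B : ℝ → ℝ} (hJ : Continuous J) (hB : Continuous B) (k : ℤ)
    (h : ∀ c, ∫ x in (0:ℝ)..(2 * π), J x * Real.cos (k * B x + c) = 0) :
    ∫ x in (0:ℝ)..(2 * π), ((J x : ℝ) : ℂ) * Complex.exp (-Complex.I * (k : ℂ) * ((B x : ℝ) : ℂ))
      = 0 := by
  have h1 := h 0
  have h2 := h (π / 2)
  simp only [add_zero, Real.cos_add_pi_div_two] at h1 h2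
  have key : ∀ x, ((J x : ℝ) : ℂ) * Complex.exp (-Complex.I * (k : ℂ) * ((B x : ℝ) : ℂ))
      = ((J x * Real.cos (k * B x) : ℝ) : ℂ)
        + Complex.I * ((J x * -Real.sin (k * B x) : ℝ) : ℂ) := fun x => by
    rw [show -Complex.I * (k : ℂ) * ((B x : ℝ) : ℂ) = ((-(k * B x) : ℝ) : ℂ) * Complex.I by
      push_cast; ring, Complex.exp_mul_I, ← Complex.ofReal_cos, ← Complex.ofReal_sin, Real.cos_neg,
      Real.sin_neg]
    push_cast
    ring
  simp only [key]
  rw [intervalIntegral.integral_add, intervalIntegral.integral_const_mul,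
    intervalIntegral.integral_ofReal, intervalIntegral.integral_ofReal, h1, h2]
  · simp
  all_goals exact Continuous.intervalIntegrable (by fun_prop) _ _

theorem J1_continuous : Continuous J1 :=
  continuous_iff_continuousAt.2 fun x => (J1_hasDerivAt x).continuousAt

theorem Sfun_eq_zero {r : ℝ} {a b : ℝ → ℝ} (ha : Continuous a) (hb : Continuous b)
    (h : ∀ k : ℤ, k ≠ 0 → ∀ c,
      ∫ x in (0:ℝ)..(2 * π), J1 (k * (r + a x)) * Real.cos (k * (x + b x) + c) = 0) (I : ℝ) :
    Sfun r a b I = 0 := by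
  unfold Sfun
  have : ∀ k : ℤ, (if k = 0 then 0 else
    (1 / (k : ℂ)) * (∫ x in (0:ℝ)..(2 * π),
        ((J1 ((k : ℝ) * (r + a x)) : ℝ) : ℂ) *
          Complex.exp (-Complex.I * (k : ℂ) * ((x + b x : ℝ) : ℂ))) *
      Complex.exp (Complex.I * (k : ℂ) * (I : ℂ))) = 0 := fun k => by
    split_ifs with hk
    · rfl
    · have hJ := J1_continuous
      rw [integral_cexp_eq_zero (J := fun x => J1 (k * (r + a x))) (B := fun x => x + b x)
        (by fun_prop) (by fun_prop) k (h k hk)]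
      simp
  simp only [this, tsum_zero]

/-! ### The level curve and its first variation -/

/-- For small parameters the level set `f = 0` is the graph of a periodic function of `B`, smooth
jointly with the parameter `τ`, where `s = σ τ`. -/
theorem exists_curve {r m C : ℝ} {G : ℝ → ℝ} (hr : 0 < r) (hG : ContDiff ℝ (⊤ : ℕ∞) G)
    (pG : Function.Periodic G (2 * π)) (hC : ∀ x, |deriv G x| ≤ C) {σ : ℝ → ℝ}
    (hσ : ContDiff ℝ (⊤ : ℕ∞) σ) (hσC : ∀ τ, |σ τ| * (|m| + 4 * π * r * C) ≤ 1 / 4) :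
    ∃ Y : ℝ × ℝ → ℝ, ContDiff ℝ (⊤ : ℕ∞) Y ∧
      (∀ τ B y, Fdef r m G (σ τ) B y = 0 ↔ y = Y (τ, B)) ∧
      ∀ τ B, Y (τ, B + 2 * π) = Y (τ, B) := by
  obtain ⟨Y, hY, hYF⟩ := global_implicit (E := ℝ × ℝ)
    (F := fun q => Fdef r m G (σ q.1.1) q.1.2 q.2)
    (Fdef_contDiff r m hG (hσ.comp contDiff_fst.fst) contDiff_fst.snd contDiff_snd)
    (fun e y => Fdy r m G (σ e.1) e.2 y) (fun e y => Fdef_dy r m hG (σ e.1) e.2 y)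
    (fun e => ⟨3 / 4, by norm_num, fun y => by
      have := Fdy_lower hr hC (hσC e.1) e.2 y
      have := Real.one_le_cosh y
      linarith⟩)
  refine ⟨Y, hY, fun τ B y => hYF (τ, B) y, fun τ B => ?_⟩
  have h := (hYF (τ, B + 2 * π) _).2 rfl
  refine (hYF (τ, B) _).1 ?_
  simpa only [Fdef, PT_periodic 1 pG _ B] using h

/-- First variation of the level curve, by implicit differentiation at `s = 0`. -/
theorem Y_deriv_zero {r m : ℝ} {G : ℝ → ℝ} (hG : ContDiff ℝ (⊤ : ℕ∞) G) {σ : ℝ → ℝ}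
    (hσ0 : σ 0 = 0) (hσd : HasDerivAt σ 1 0) {Y : ℝ × ℝ → ℝ} (hY : ContDiff ℝ (⊤ : ℕ∞) Y)
    (hYF : ∀ τ B y, Fdef r m G (σ τ) B y = 0 ↔ y = Y (τ, B)) (B : ℝ) :
    Y (0, B) = 0 ∧ HasDerivAt (fun τ => Y (τ, B)) (-(m + PT 1 G r B)) 0 := by
  have h0 : Y (0, B) = 0 := ((hYF 0 B 0).1 (by simp [Fdef, hσ0])).symm
  refine ⟨h0, ?_⟩
  have hYs : ContDiff ℝ (⊤ : ℕ∞) fun τ => Y (τ, B) := hY.comp (by fun_prop)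
  have h1 := smooth_hasDerivAt hYs 0
  have hg : ContDiff ℝ (⊤ : ℕ∞) fun τ =>
      m * Real.cosh (Y (τ, B)) + PT 1 G (r * Real.exp (Y (τ, B))) B :=
    (contDiff_const.mul (Real.contDiff_cosh.comp hYs)).add
      (PT_comp_contDiff r 1 hG contDiff_const hYs)
  have h2 : HasDerivAt (fun τ => Fdef r m G (σ τ) B (Y (τ, B))) _ 0 :=
    h1.sinh.add (hσd.mul (smooth_hasDerivAt hg 0))
  have h3 : (fun τ => Fdef r m G (σ τ) B (Y (τ, B))) = fun _ => 0 :=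
    funext fun τ => (hYF τ B _).2 rfl
  rw [h3] at h2
  have h4 := h2.unique (hasDerivAt_const (0 : ℝ) (0 : ℝ))
  simp only [h0, hσ0, Real.cosh_zero, Real.exp_zero] at h4
  convert! h1 using 1
  simp only [mul_one, one_mul, zero_mul] at h4
  linarith

/-- First variation of the density; the quotient term is quadratic in `s` and does not contribute. -/
theorem dens_deriv_zero {r m : ℝ} {G : ℝ → ℝ} (hG : ContDiff ℝ (⊤ : ℕ∞) G) {σ : ℝ → ℝ}
    (hσ : ContDiff ℝ (⊤ : ℕ∞) σ) (hσ0 : σ 0 = 0) (hσd : HasDerivAt σ 1 0) {y : ℝ → ℝ}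
    (hy : ContDiff ℝ (⊤ : ℕ∞) y) (hy0 : y 0 = 0) (B : ℝ)
    (hne : ∀ τ, Fdy r m G (σ τ) B (y τ) ≠ 0) :
    dens r m G (σ 0) B (y 0) = 1 ∧
      HasDerivAt (fun τ => dens r m G (σ τ) B (y τ)) (r * PT 2 (deriv G) r B) 0 := by
  refine ⟨by simp [dens, Fdy, FdB, hσ0, hy0], ?_⟩
  have hG' := smooth_deriv hG
  have hg1 : ContDiff ℝ (⊤ : ℕ∞) fun τ => m * Real.sinh (y τ)
      + r * Real.exp (y τ) * PT 2 (deriv G) (r * Real.exp (y τ)) B :=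
    (contDiff_const.mul (Real.contDiff_sinh.comp hy)).add
      (((rexp_contDiff r).comp hy).mul (PT_comp_contDiff r 2 hG' contDiff_const hy))
  have hg2 : ContDiff ℝ (⊤ : ℕ∞) fun τ => (r * Real.exp (y τ)
      * PT 1 (deriv G) (r * Real.exp (y τ)) B) ^ 2 / Fdy r m G (σ τ) B (y τ) :=
    ((((rexp_contDiff r).comp hy).mul (PT_comp_contDiff r 1 hG' contDiff_const hy)).pow 2).div
      (Fdy_contDiff r m hG hσ contDiff_const hy) hne
  have h := (((Real.hasDerivAt_cosh (y 0)).comp 0 (smooth_hasDerivAt hy 0)).add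
    (hσd.mul (smooth_hasDerivAt hg1 0))).sub ((hσd.mul hσd).mul (smooth_hasDerivAt hg2 0))
  have e : ∀ τ, (r * Real.exp (y τ) * (σ τ * PT 1 (deriv G) (r * Real.exp (y τ)) B)) ^ 2
        / Fdy r m G (σ τ) B (y τ) = σ τ * σ τ * ((r * Real.exp (y τ)
        * PT 1 (deriv G) (r * Real.exp (y τ)) B) ^ 2 / Fdy r m G (σ τ) B (y τ)) := fun τ => by ring
  simp only [dens, FdB, e]
  convert! h using 1
  simp [hσ0, hy0]

/-! ### The Zoll family -/

/-- construction of a one-parameter family of Zoll magnetic systems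
tangent to any direction (α,β) in the kernel V_{A_*}. -/
theorem statement0 (Astar : ℝ) (hAstar : 0 < Astar) (α β : ℝ → ℝ)
    (hα : smoothPer α) (hβ : smoothPer β)
    (hV : ∀ k : ℤ, k ≠ 0 →
      ((deriv J1 ((k : ℝ) * Astar) : ℝ) : ℂ) * fcR α k
        - Complex.I * ((J1 ((k : ℝ) * Astar) : ℝ) : ℂ) * fcR β k = 0) :
    ∃ δ : ℝ, 0 < δ ∧ ∃ a b : ℝ → ℝ → ℝ,
      ContDiff ℝ (⊤ : ℕ∞) (fun p : ℝ × ℝ => a p.1 p.2) ∧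
      ContDiff ℝ (⊤ : ℕ∞) (fun p : ℝ × ℝ => b p.1 p.2) ∧
      (∀ τ, Function.Periodic (a τ) (2 * π)) ∧
      (∀ τ, Function.Periodic (b τ) (2 * π)) ∧
      (∀ x, a 0 x = 0) ∧ (∀ x, b 0 x = 0) ∧
      (∀ x, HasDerivAt (fun τ => a τ x) (α x) 0) ∧
      (∀ x, HasDerivAt (fun τ => b τ x) (β x) 0) ∧
      (∀ τ : ℝ, |τ| < δ → ∀ I : ℝ, Sfun Astar (a τ) (b τ) I = 0) := by
  rename' Astar => r, hAstar => hr
  obtain ⟨G, m, hG, pG, hGα, hGβ⟩ := exists_profile hr hα hβ hV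
  obtain ⟨C, hC⟩ := exists_bound_of_periodic (smooth_deriv hG).continuous (by positivity)
    (periodic_deriv pG)
  have hC0 : 0 ≤ C := (abs_nonneg _).trans (hC 0)
  set D := |m| + 4 * π * r * C with hD
  have hD0 : 0 ≤ D := by positivity
  -- `D` is the constant in the smallness condition on `s` under which the density is positive.
  set δ : ℝ := (4 * (D + 1))⁻¹ with hδ
  have hδ0 : 0 < δ := by positivity
  -- The parameter `s = σ τ` stays in `[-δ, δ]` for all real `τ`, so that the family is globally
  -- defined and smooth; it is tangent to `τ` at `0`.
  set σ : ℝ → ℝ := fun τ => δ * Real.sin (τ / δ) with hσdef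
  have hσ : ContDiff ℝ (⊤ : ℕ∞) σ :=
    contDiff_const.mul (Real.contDiff_sin.comp (contDiff_id.div_const δ))
  have hσ0 : σ 0 = 0 := by simp [hσdef]
  have hσd : HasDerivAt σ 1 0 := by
    have h := ((Real.hasDerivAt_sin (0 / δ)).comp 0 ((hasDerivAt_id (0 : ℝ)).div_const δ)).const_mul
      δ
    convert! h using 1
    simp [hδ0.ne']
  have hσC : ∀ τ, |σ τ| * D ≤ 1 / 4 := fun τ => by
    have h1 : |σ τ| ≤ δ := by
      rw [hσdef, abs_mul, abs_of_pos hδ0]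
      exact mul_le_of_le_one_right hδ0.le (Real.abs_sin_le_one _)
    calc |σ τ| * D ≤ δ * D := by gcongr
      _ ≤ 1 / 4 := by
        rw [hδ, inv_mul_le_iff₀ (by positivity)]
        linarith
  obtain ⟨Y, hY, hYF, pY⟩ := exists_curve hr hG pG hC hσ hσC
  have hF : ∀ τ B, Fdef r m G (σ τ) B (Y (τ, B)) = 0 := fun τ B => (hYF τ B _).2 rfl
  have hne : ∀ τ B y, Fdy r m G (σ τ) B y ≠ 0 := fun τ B y => (Fdy_pos hr hC (hσC τ) B y).ne'
  set R : ℝ × ℝ → ℝ := fun p => dens r m G (σ p.1) p.2 (Y p) with hRdef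
  have hR : ContDiff ℝ (⊤ : ℕ∞) R :=
    dens_contDiff r m hG (hσ.comp contDiff_fst) contDiff_snd hY fun e => hne _ _ _
  have pR : ∀ τ B, R (τ, B + 2 * π) = R (τ, B) := fun τ B => by
    simp only [hRdef, dens, Fdy, FdB, pY, PT_periodic _ (periodic_deriv pG) _ B]
  have hRlow : ∀ p, 1 / 2 ≤ R p := fun p => dens_lower hr hC (hσC p.1) p.2 (Y p)
  obtain ⟨N, hN⟩ : ∃ N : ℝ → ℝ, N = fun τ => (2 * π)⁻¹ * ∫ t in (0:ℝ)..(2 * π), R (τ, t) :=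
    ⟨_, rfl⟩
  -- The constant of integration `-σ β (0)` is what makes `b` move by `β` and not by `β - β (0)`.
  obtain ⟨X, hX⟩ : ∃ X : ℝ × ℝ → ℝ, X = fun p => -(σ p.1 * β 0)
      + (N p.1)⁻¹ * ∫ t in (0:ℝ)..p.2, R (p.1, t) := ⟨_, rfl⟩
  obtain ⟨hNpos, hXs, hXd, pX, V, hVs, hXV⟩ := circle_inverse hR pR (by norm_num) hRlow
    (κ := fun τ => -(σ τ * β 0)) (hσ.mul contDiff_const).neg hN hX
  have hXVx : ∀ τ x, X (τ, V (τ, x)) = x := fun τ x => (hXV _ _ _).2 rfl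
  have pV : ∀ τ x, V (τ, x + 2 * π) = V (τ, x) + 2 * π := fun τ x => by
    refine ((hXV _ _ _).1 ?_).symm
    rw [pX, hXVx]
  -- values and first-order variations at `τ = 0`
  have hY0 := Y_deriv_zero hG hσ0 hσd hY hYF
  have hR0 : ∀ B, R (0, B) = 1 ∧ HasDerivAt (fun τ => R (τ, B)) (-deriv β B) 0 := fun B => by
    rw [← hGβ B]
    exact dens_deriv_zero hG hσ hσ0 hσd (y := fun τ => Y (τ, B)) (hY.comp (by fun_prop))
      (hY0 B).1 B fun τ => hne _ _ _
  have hβc : Continuous (deriv β) := (smooth_deriv hβ.1).continuous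
  have hInt : ∀ B, HasDerivAt (fun τ => ∫ t in (0:ℝ)..B, R (τ, t)) (-(β B - β 0)) 0 := fun B => by
    have hs : ∀ t, ContDiff ℝ (⊤ : ℕ∞) fun τ => R (τ, t) := fun t => hR.comp (by fun_prop)
    have h := pint_deriv (h := fun τ t => R (τ, t)) (h' := fun τ t => deriv (fun τ => R (τ, t)) τ)
      (hR.of_le (by exact_mod_cast le_top)) 0 B 0 fun t => smooth_hasDerivAt (hs t) 0
    convert! h using 1
    have e : ∀ t, deriv (fun τ => R (τ, t)) 0 = -deriv β t := fun t => (hR0 t).2.deriv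
    simp only [e]
    rw [intervalIntegral.integral_neg, intervalIntegral.integral_eq_sub_of_hasDerivAt
      (fun t _ => smooth_hasDerivAt hβ.1 t) (hβc.intervalIntegrable _ _)]
  have hN0 : N 0 = 1 := by
    simp only [hN, (hR0 _).1, intervalIntegral.integral_const, sub_zero, smul_eq_mul, mul_one]
    exact inv_mul_cancel₀ (by positivity)
  have hX0 : ∀ B, X (0, B) = B := fun B => by
    simp only [hX, (hR0 _).1, hN0, hσ0]
    simp
  have hNd : HasDerivAt N 0 0 := by
    rw [hN]
    have h := (hInt (2 * π)).const_mul (2 * π)⁻¹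
    have hβ0 : β (2 * π) = β 0 := by simpa using hβ.2 0
    convert! h using 1
    rw [hβ0]
    simp
  have hXτ : ∀ B, HasDerivAt (fun τ => X (τ, B)) (-β B) 0 := fun B => by
    rw [hX]
    have h := (hσd.mul_const (β 0)).neg.add ((hNd.inv (hNpos 0).ne').mul (hInt B))
    convert! h using 1
    simp only [hN0, Pi.inv_apply]
    ring
  have hV0 : ∀ x, V (0, x) = x := fun x => ((hXV 0 x x).1 (hX0 x)).symm
  -- Differentiate `X (τ, V (τ, x)) = x`.
  have hVd : ∀ x, HasDerivAt (fun τ => V (τ, x)) (β x) 0 := fun x => by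
    have hVx : ContDiff ℝ (⊤ : ℕ∞) fun τ => V (τ, x) := hVs.comp (by fun_prop)
    have h1 := smooth_hasDerivAt hVx 0
    have h2 := chain2 (Z := X) (a := fun τ => τ) (b := fun τ => V (τ, x)) (t := 0)
      (hXs.differentiable (by simp) _) (hXτ _) (hXd _ _) (hasDerivAt_id (0 : ℝ)) h1
    simp only [hXVx, hV0, hN0, (hR0 _).1] at h2
    have h3 := h2.unique (hasDerivAt_const (0 : ℝ) x)
    convert! h1 using 1
    linarith
  have hAs : ContDiff ℝ (⊤ : ℕ∞) fun p : ℝ × ℝ => r * Real.exp (Y (p.1, V p)) :=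
    (rexp_contDiff r).comp (hY.comp (contDiff_fst.prodMk hVs))
  refine ⟨δ, hδ0, fun τ x => r * Real.exp (Y (τ, V (τ, x))) - r, fun τ x => V (τ, x) - x,
    hAs.sub contDiff_const, hVs.sub contDiff_snd, fun τ x => ?_, fun τ x => ?_, fun x => ?_,
    fun x => ?_, fun x => ?_, fun x => ?_, fun τ _ I => ?_⟩
  · simp only [pV, pY]
  · simp only [pV]
    ring
  · simp [(hY0 _).1]
  · simp [hV0]
  · have hYB : HasDerivAt (fun B => Y (0, B)) 0 (V (0, x)) := by
      rw [show (fun B => Y (0, B)) = fun _ => 0 from funext fun B => (hY0 B).1]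
      exact hasDerivAt_const _ _
    have h1 := chain2 (Z := Y) (a := fun τ => τ) (b := fun τ => V (τ, x)) (t := 0)
      (hY.differentiable (by simp) _) (hY0 _).2 hYB (hasDerivAt_id (0 : ℝ)) (hVd x)
    have h2 := ((rexp_hasDerivAt r (Y (0, V (0, x)))).comp 0 h1).sub_const r
    convert! h2 using 1
    rw [hGα, (hY0 _).1, hV0]
    have := hr.ne'
    simp
    field_simp
  · simpa using (hVd x).sub_const x
  · have cV : Continuous fun x => V (τ, x) := hVs.continuous.comp (by fun_prop)
    have cA : Continuous fun x => r * Real.exp (Y (τ, V (τ, x))) :=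
      hAs.continuous.comp (by fun_prop : Continuous fun x : ℝ => (τ, x))
    have cR : Continuous fun x => R (τ, x) := hR.continuous.comp (by fun_prop)
    have sY : ContDiff ℝ (⊤ : ℕ∞) fun B => Y (τ, B) := hY.comp (by fun_prop)
    refine Sfun_eq_zero (a := fun x => r * Real.exp (Y (τ, V (τ, x))) - r)
      (b := fun x => V (τ, x) - x) (cA.sub continuous_const) (cV.sub continuous_id) (fun k hk c => ?_) I
    have hk' : (k : ℝ) ≠ 0 := by exact_mod_cast hk
    simp only [add_sub_cancel]
    have cJ := J1_continuous
    have cY := sY.continuous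
    rw [integral_comp_inverse (X := fun B => X (τ, B)) (V := fun x => V (τ, x))
      (R := fun B => R (τ, B)) (N := N τ)
      (g := fun B => J1 (k * (r * Real.exp (Y (τ, B)))) * Real.cos (k * B + c))
      (hXd τ) (pX τ) (hXV τ) cV cR (pR τ) (by fun_prop) (fun B => by
        simp only [pY]
        rw [show (k : ℝ) * (B + 2 * π) + c = k * B + c + k * (2 * π) by ring,
          Real.cos_add_int_mul_two_pi])]
    -- an antiderivative of `sin (k · + c)`
    set L : ℝ → ℝ := fun y => -(Real.cos (k * y + c) / k) with hL
    have hLd : deriv L = fun y => Real.sin (k * y + c) := funext fun y => by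
      have h1 : HasDerivAt (fun y : ℝ => (k : ℝ) * y + c) k y := by
        simpa using ((hasDerivAt_id y).const_mul (k : ℝ)).add_const c
      have h2 := (((Real.hasDerivAt_cos _).comp y h1).div_const (k : ℝ)).neg
      refine (HasDerivAt.deriv h2).trans ?_
      field_simp
    have hLs : ContDiff ℝ (⊤ : ℕ∞) L := by
      have := Real.contDiff_cos (n := ((⊤ : ℕ∞) : WithTop ℕ∞))
      fun_prop
    have pL : Function.Periodic L (2 * π) := fun y => by
      simp only [hL]
      rw [show (k : ℝ) * (y + 2 * π) + c = k * y + c + k * (2 * π) by ring,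
          Real.cos_add_int_mul_two_pi]
    have h := integral_dens_eq_zero r m hG hLs pG pL (σ τ) sY (pY τ) (hF τ) fun B => hne _ _ _
    simp only [hLd, PT_sin, mul_assoc] at h
    rw [intervalIntegral.integral_const_mul, intervalIntegral.integral_const_mul] at h
    have h' := (mul_eq_zero.1 ((mul_eq_zero.1 h).resolve_left two_ne_zero)).resolve_left
      Real.pi_ne_zero
    simp only [mul_assoc, hRdef]
    rw [h', mul_zero]
end
end

section
/- Let A : 𝕋 → (0,∞) and b : 𝕋 → ℝ be smooth, set B(x) := x + b(x), and suppose A'(x) sin φ + B'(x) > 0 for all (x,φ) ∈ 𝕋 × 𝕋. Let x_{A,B} : 𝕋 × 𝕋 → 𝕋 be the (unique, smooth) function satisfying A(x_{A,B}(I,φ)) sin φ + B(x_{A,B}(I,φ)) = I for all (I,φ), and define S(a,b)(I) := ∫_𝕋 (cos²φ) · A(x_{A,B}(I,φ)) · (∂x_{A,B}/∂I)(I,φ) dφ − πA₀, where A₀ := (1/2π)∫_𝕋 A(x)dx. Then S(a,b) has zero mean and, for every k ∈ ℤ \ {0}, its k-th Fourier coefficient equals (1/k) ∫_𝕋 J₁(kA(x))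 e^{−ikB(x)} dx. -/
open scoped Real BigOperators
open MeasureTheory

noncomputable section

/-!
After exchanging the order of integration, the substitution `x = X I φ` (for fixed `φ`), for which
`I = A x sin φ + B x`, turns `∫ S(I) e^{-ikI} dI` into
`∫ A(x) e^{-ikB(x)} (∫ cos²φ e^{-ikA(x) sin φ} dφ) dx`; the range of `x` is an interval of length
`2π`, which may be moved to `[0, 2π]` because `k ∈ ℤ` makes the integrand periodic. This is
`integral_action_mul_exp`. For `k = 0` the inner integral is `π`, which gives the zero mean. For
`k ≠ 0`, integration by parts in `φ` identifies `θ ∫ cos²φ e^{-iθ sin φ} dφ` with `2π J₁(θ)`,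
`θ = kA(x)`; this is `mul_integral_cos_sq_mul_exp`.
-/

theorem integral_swap_of_continuous {F : ℝ → ℝ → ℂ} (hF : Continuous F.uncurry) (a b c d : ℝ) :
    ∫ x in a..b, ∫ y in c..d, F x y = ∫ y in c..d, ∫ x in a..b, F x y := by
  apply intervalIntegral_intervalIntegral_swap
  exact (hF.continuousOn.integrableOn_compact
    (isCompact_uIcc.prod isCompact_uIcc)).mono_set
      (Set.prod_mono Set.uIoc_subset_uIcc Set.uIoc_subset_uIcc)

/-- The Bessel integral is real, by the symmetry `φ ↦ 2π - φ`; so taking the real part in `J1`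
loses nothing. The sign of the phase is the opposite of the one in `J1`. -/
theorem J1_eq_s3 (θ : ℝ) :
    2 * (π : ℂ) * (J1 θ : ℂ) = ∫ φ in (0:ℝ)..(2 * π),
      Complex.exp (-Complex.I * (θ : ℂ) * (Real.sin φ : ℂ)) * Complex.exp (Complex.I * (φ : ℂ)) := by
  have hconj : (starRingEnd ℂ) (∫ φ in (0:ℝ)..(2 * π),
      Complex.exp (Complex.I * (θ : ℂ) * (Real.sin φ : ℂ)) * Complex.exp (-Complex.I * (φ : ℂ)))
      = ∫ φ in (0:ℝ)..(2 * π),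
      Complex.exp (-Complex.I * (θ : ℂ) * (Real.sin φ : ℂ)) *
        Complex.exp (Complex.I * (φ : ℂ)) := by
    rw [← intervalIntegral.intervalIntegral_conj]
    refine intervalIntegral.integral_congr fun φ _ => ?_
    simp only [map_mul, ← Complex.exp_conj, map_neg, Complex.conj_I, Complex.conj_ofReal, neg_neg]
  have hsymm : (∫ φ in (0:ℝ)..(2 * π),
      Complex.exp (Complex.I * (θ : ℂ) * (Real.sin φ : ℂ)) * Complex.exp (-Complex.I * (φ : ℂ)))
      = ∫ φ in (0:ℝ)..(2 * π),
      Complex.exp (-Complex.I * (θ : ℂ) * (Real.sin φ : ℂ)) *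
        Complex.exp (Complex.I * (φ : ℂ)) := by
    have h := intervalIntegral.integral_comp_sub_left (a := 0) (b := 2 * π)
      (fun φ : ℝ => Complex.exp (Complex.I * (θ : ℂ) * (Real.sin φ : ℂ)) *
        Complex.exp (-Complex.I * (φ : ℂ))) (2 * π)
    simp only [sub_self, sub_zero] at h
    rw [← h]
    refine intervalIntegral.integral_congr fun φ _ => ?_
    have e1 : Real.sin (2 * π - φ) = - Real.sin φ := by simp
    have e2 : Complex.exp (-Complex.I * ((2 * π - φ : ℝ) : ℂ)) = Complex.exp (Complex.I * φ) := by
      rw [Complex.exp_eq_exp_iff_exists_int]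
      exact ⟨-1, by push_cast; ring⟩
    simp only [e1, e2]
    push_cast
    ring_nf
  have hreal := Complex.conj_eq_iff_re.mp (hconj.trans hsymm.symm)
  have hπ : (π : ℂ) ≠ 0 := by exact_mod_cast Real.pi_ne_zero
  rw [← hsymm, ← hreal, J1]
  have : (1 / (2 * (π : ℂ))) = ((1 / (2 * π) : ℝ) : ℂ) := by push_cast; rfl
  rw [this, Complex.re_ofReal_mul]
  push_cast
  field_simp

theorem mul_integral_cos_sq_mul_exp {θ : ℝ} (hθ : θ ≠ 0) :
    (θ : ℂ) * ∫ φ in (0:ℝ)..(2 * π),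
      ((Real.cos φ ^ 2 : ℝ) : ℂ) * Complex.exp (-Complex.I * (θ : ℂ) * (Real.sin φ : ℂ))
      = 2 * (π : ℂ) * (J1 θ : ℂ) := by
  have hθ' : (θ : ℂ) ≠ 0 := by exact_mod_cast hθ
  rw [J1_eq_s3, ← sub_eq_zero, ← intervalIntegral.integral_const_mul,
    ← intervalIntegral.integral_sub]
  rotate_left
  · exact Continuous.intervalIntegrable (by fun_prop) _ _
  · exact Continuous.intervalIntegrable (by fun_prop) _ _
  -- The difference of the integrands has a `2π`-periodic primitive.
  have hd : ∀ φ : ℝ, HasDerivAt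
      (fun φ : ℝ => (Complex.I * (Real.cos φ : ℂ) - Complex.I / θ) *
        Complex.exp (-Complex.I * (θ : ℂ) * (Real.sin φ : ℂ)))
      ((θ : ℂ) * (((Real.cos φ ^ 2 : ℝ) : ℂ) *
          Complex.exp (-Complex.I * (θ : ℂ) * (Real.sin φ : ℂ))) -
        Complex.exp (-Complex.I * (θ : ℂ) * (Real.sin φ : ℂ)) *
          Complex.exp (Complex.I * (φ : ℂ))) φ := by
    intro φ
    have hs : HasDerivAt (fun φ : ℝ => (Real.sin φ : ℂ)) (Real.cos φ : ℂ) φ :=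
      (Real.hasDerivAt_sin φ).ofReal_comp
    have hc : HasDerivAt (fun φ : ℝ => (Real.cos φ : ℂ)) ((-Real.sin φ : ℝ) : ℂ) φ :=
      (Real.hasDerivAt_cos φ).ofReal_comp
    have h := ((hc.const_mul Complex.I).sub_const (Complex.I / θ)).mul
      (hs.const_mul (-Complex.I * (θ : ℂ))).cexp
    refine h.congr_deriv ?_
    rw [mul_comm Complex.I (φ : ℂ), Complex.exp_mul_I, ← Complex.ofReal_cos,
      ← Complex.ofReal_sin]
    push_cast
    field_simp
    ring_nf
    simp only [Complex.I_sq]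
    ring
  rw [intervalIntegral.integral_eq_sub_of_hasDerivAt (fun φ _ => hd φ)
    (Continuous.intervalIntegrable (by fun_prop) _ _)]
  simp

/-- The change of variables `x = X I φ`. Only the defining equation of `X` enters: injectivity of
`X · φ` is not needed, since `x` and `I` are integrated as oriented variables. -/
theorem integral_action_mul_exp {A B : ℝ → ℝ} (hA : Continuous A)
    (hAper : Function.Periodic A (2 * π)) (hB : Continuous B)
    (hBper : ∀ x, B (x + 2 * π) = B x + 2 * π)
    {X : ℝ → ℝ → ℝ} (hX : ContDiff ℝ (⊤ : ℕ∞) (fun p : ℝ × ℝ => X p.1 p.2))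
    (hXeq : ∀ I φ : ℝ, A (X I φ) * Real.sin φ + B (X I φ) = I)
    (hXI : ∀ I φ : ℝ, X (I + 2 * π) φ = X I φ + 2 * π) (k : ℤ) :
    (∫ I in (0:ℝ)..(2 * π), ((∫ φ in (0:ℝ)..(2 * π),
        Real.cos φ ^ 2 * A (X I φ) * deriv (fun I' => X I' φ) I : ℝ) : ℂ) *
          Complex.exp (-Complex.I * (k : ℂ) * (I : ℂ)))
      = ∫ x in (0:ℝ)..(2 * π), ((A x : ℝ) : ℂ) *
          Complex.exp (-Complex.I * (k : ℂ) * ((B x : ℝ) : ℂ)) *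
          ∫ φ in (0:ℝ)..(2 * π), ((Real.cos φ ^ 2 : ℝ) : ℂ) *
            Complex.exp (-Complex.I * (((k : ℝ) * A x : ℝ) : ℂ) * (Real.sin φ : ℂ)) := by
  have hXd : ∀ I φ : ℝ, HasDerivAt (fun I' => X I' φ)
      (fderiv ℝ (fun p : ℝ × ℝ => X p.1 p.2) (I, φ) (1, 0)) I := by
    intro I φ
    have h1 := (hX.differentiable (by simp) (I, φ)).hasFDerivAt
    have h2 : HasDerivAt (fun I' : ℝ => (I', φ)) ((1 : ℝ), (0 : ℝ)) I :=
      (hasDerivAt_id I).prodMk (hasDerivAt_const I φ)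
    exact h1.comp_hasDerivAt I h2
  have hXc : Continuous (fun p : ℝ × ℝ => X p.1 p.2) := hX.continuous
  have hdc : Continuous (fun p : ℝ × ℝ => deriv (fun I' => X I' p.2) p.1) := by
    have h : (fun p : ℝ × ℝ => deriv (fun I' => X I' p.2) p.1)
        = fun p : ℝ × ℝ => fderiv ℝ (fun p : ℝ × ℝ => X p.1 p.2) p (1, 0) :=
      funext fun p => (hXd p.1 p.2).deriv
    rw [h]
    exact (hX.continuous_fderiv (by simp)).clm_apply continuous_const
  -- The integrand after the substitution.
  let G : ℝ → ℝ → ℂ := fun φ x => ((Real.cos φ ^ 2 * A x : ℝ) : ℂ) *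
    Complex.exp (-Complex.I * (k : ℂ) * ((A x * Real.sin φ + B x : ℝ) : ℂ))
  have hGc : Continuous G.uncurry := by
    simp only [G, Function.uncurry_def]
    fun_prop
  have hGper : ∀ φ, Function.Periodic (G φ) (2 * π) := by
    intro φ x
    simp only [G, hAper x, hBper x]
    congr 1
    rw [Complex.exp_eq_exp_iff_exists_int]
    exact ⟨-k, by push_cast; ring⟩
  have hsub : ∀ φ, (∫ I in (0:ℝ)..(2 * π),
      ((Real.cos φ ^ 2 * A (X I φ) * deriv (fun I' => X I' φ) I : ℝ) : ℂ) *
          Complex.exp (-Complex.I * (k : ℂ) * (I : ℂ))) = ∫ x in (0:ℝ)..(2 * π), G φ x := by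
    intro φ
    have hd : Continuous fun I => deriv (fun I' => X I' φ) I :=
      hdc.comp (g := fun p : ℝ × ℝ => deriv (fun I' => X I' p.2) p.1) (f := fun I : ℝ => (I, φ))
        (by fun_prop)
    have hGφ : Continuous (G φ) := by
      simp only [G]
      fun_prop
    have h := intervalIntegral.integral_deriv_smul_comp (a := 0) (b := 2 * π)
      (f := fun I => X I φ) (f' := fun I => deriv (fun I' => X I' φ) I) (g := G φ)
      (fun I _ => (hXd I φ).differentiableAt.hasDerivAt) hd.continuousOn hGφ
    have h2 : X (2 * π) φ = X 0 φ + 2 * π := by simpa using hXI 0 φ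
    rw [h2, (hGper φ).intervalIntegral_add_eq (X 0 φ) 0, zero_add] at h
    rw [← h]
    refine intervalIntegral.integral_congr fun I _ => ?_
    simp only [Function.comp, G, hXeq, Complex.real_smul]
    push_cast
    ring
  calc _ = ∫ I in (0:ℝ)..(2 * π), ∫ φ in (0:ℝ)..(2 * π),
        ((Real.cos φ ^ 2 * A (X I φ) * deriv (fun I' => X I' φ) I : ℝ) : ℂ) *
          Complex.exp (-Complex.I * (k : ℂ) * (I : ℂ)) := by
        refine intervalIntegral.integral_congr fun I _ => ?_
        simp only [intervalIntegral.integral_mul_const, intervalIntegral.integral_ofReal]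
    _ = ∫ φ in (0:ℝ)..(2 * π), ∫ x in (0:ℝ)..(2 * π), G φ x := by
        rw [integral_swap_of_continuous]
        · exact intervalIntegral.integral_congr fun φ _ => hsub φ
        · simp only [Function.uncurry_def]
          fun_prop
    _ = ∫ x in (0:ℝ)..(2 * π), ∫ φ in (0:ℝ)..(2 * π), G φ x :=
        integral_swap_of_continuous hGc _ _ _ _
    _ = _ := by
        refine intervalIntegral.integral_congr fun x _ => ?_
        rw [← intervalIntegral.integral_const_mul]
        refine intervalIntegral.integral_congr fun φ _ => ?_
        have e : -Complex.I * (k : ℂ) * ((A x * Real.sin φ + B x : ℝ) : ℂ)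
            = -Complex.I * (k : ℂ) * ((B x : ℝ) : ℂ) +
              -Complex.I * (((k : ℝ) * A x : ℝ) : ℂ) * (Real.sin φ : ℂ) := by
          push_cast
          ring
        simp only [G, e, Complex.exp_add]
        push_cast
        ring

/-- zero mean of the action functional and computation of its Fourier
coefficients in terms of the Bessel function J₁. -/
theorem statement3 (A b : ℝ → ℝ)
    (hA : ContDiff ℝ (⊤ : ℕ∞) A) (hApos : ∀ x, 0 < A x)
    (hAper : Function.Periodic A (2 * π))
    (hb : ContDiff ℝ (⊤ : ℕ∞) b) (hbper : Function.Periodic b (2 * π))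
    (B : ℝ → ℝ) (hB : ∀ x, B x = x + b x)
    (hpos : ∀ x φ : ℝ, 0 < deriv A x * Real.sin φ + deriv B x)
    (X : ℝ → ℝ → ℝ)
    (hX : ContDiff ℝ (⊤ : ℕ∞) (fun p : ℝ × ℝ => X p.1 p.2))
    (hXeq : ∀ I φ : ℝ, A (X I φ) * Real.sin φ + B (X I φ) = I)
    (hXI : ∀ I φ : ℝ, X (I + 2 * π) φ = X I φ + 2 * π)
    (hXφ : ∀ I φ : ℝ, X I (φ + 2 * π) = X I φ)
    (S : ℝ → ℝ)
    (hS : ∀ I : ℝ, S I =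
      (∫ φ in (0:ℝ)..(2 * π), Real.cos φ ^ 2 * A (X I φ) * deriv (fun I' => X I' φ) I)
        - π * ((1 / (2 * π)) * ∫ x in (0:ℝ)..(2 * π), A x)) :
    (∫ I in (0:ℝ)..(2 * π), S I) = 0 ∧
    ∀ k : ℤ, k ≠ 0 →
      fcR S k = (1 / (k : ℂ)) * ∫ x in (0:ℝ)..(2 * π),
        ((J1 ((k : ℝ) * A x) : ℝ) : ℂ) * Complex.exp (-Complex.I * (k : ℂ) * ((B x : ℝ) : ℂ)) := by
  have hAc : Continuous A := hA.continuous
  have hBc : Continuous B := by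
    rw [funext hB]
    exact continuous_id.add hb.continuous
  have hBper : ∀ x, B (x + 2 * π) = B x + 2 * π := by
    intro x
    rw [hB, hB, hbper x]
    ring
  have key := integral_action_mul_exp hAc hAper hBc hBper hX hXeq hXI
  have hXc : Continuous (fun p : ℝ × ℝ => X p.1 p.2) := hX.continuous
  have hdc : Continuous (fun p : ℝ × ℝ => deriv (fun I' => X I' p.2) p.1) := by
    have h : (fun p : ℝ × ℝ => deriv (fun I' => X I' p.2) p.1)
        = fun p : ℝ × ℝ => fderiv ℝ (fun p : ℝ × ℝ => X p.1 p.2) p (1, 0) := by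
      funext p
      have h1 := (hX.differentiable (by simp) (p.1, p.2)).hasFDerivAt
      exact (h1.comp_hasDerivAt p.1
        ((hasDerivAt_id p.1).prodMk (hasDerivAt_const p.1 p.2))).deriv
    rw [h]
    exact (hX.continuous_fderiv (by simp)).clm_apply continuous_const
  set T : ℝ → ℝ := fun I => ∫ φ in (0:ℝ)..(2 * π),
    Real.cos φ ^ 2 * A (X I φ) * deriv (fun I' => X I' φ) I with hT
  have hTc : Continuous T := by
    apply intervalIntegral.continuous_parametric_intervalIntegral_of_continuous'
    simp only [Function.uncurry_def]
    fun_prop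
  have hπ : (π : ℂ) ≠ 0 := by exact_mod_cast Real.pi_ne_zero
  constructor
  · have h0 := key 0
    have hcos : ∫ φ in (0:ℝ)..(2 * π), Real.cos φ ^ 2 = π := by
      rw [integral_cos_sq]
      simp
    simp only [Int.cast_zero, mul_zero, zero_mul, Complex.ofReal_zero, Complex.exp_zero, mul_one,
      intervalIntegral.integral_ofReal, hcos, intervalIntegral.integral_mul_const] at h0
    have h0' : (∫ I in (0:ℝ)..(2 * π), T I) = (∫ x in (0:ℝ)..(2 * π), A x) * π := by
      exact_mod_cast h0
    simp only [hS]
    rw [intervalIntegral.integral_sub (hTc.intervalIntegrable _ _) (by simp), h0',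
      intervalIntegral.integral_const, smul_eq_mul]
    field_simp
    ring
  · intro k hk
    have hk' : (k : ℂ) ≠ 0 := by exact_mod_cast hk
    have hkR : (k : ℝ) ≠ 0 := by exact_mod_cast hk
    have hexp : ∫ I in (0:ℝ)..(2 * π), Complex.exp (-Complex.I * (k : ℂ) * (I : ℂ)) = 0 := by
      rw [integral_exp_mul_complex (by simp [hk'])]
      have : Complex.exp (-Complex.I * (k : ℂ) * ((2 * π : ℝ) : ℂ)) = 1 :=
        Complex.exp_eq_one_iff.mpr ⟨-k, by push_cast; ring⟩
      rw [this]
      simp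
    simp only [fcR, fc, hS, Complex.ofReal_sub, sub_mul]
    rw [intervalIntegral.integral_sub, intervalIntegral.integral_const_mul, hexp, mul_zero,
      sub_zero, key k, ← intervalIntegral.integral_const_mul,
      ← intervalIntegral.integral_const_mul]
    rotate_left
    · exact Continuous.intervalIntegrable (by fun_prop) _ _
    · exact Continuous.intervalIntegrable (by fun_prop) _ _
    refine intervalIntegral.integral_congr fun x _ => ?_
    have h := mul_integral_cos_sq_mul_exp (mul_ne_zero hkR (hApos x).ne')
    have hJ : ((J1 ((k : ℝ) * A x) : ℝ) : ℂ) = 1 / (2 * (π : ℂ)) *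
        (2 * (π : ℂ) * (J1 ((k : ℝ) * A x) : ℂ)) := by
      field_simp
    rw [hJ, ← h, Complex.ofReal_mul, Complex.ofReal_intCast]
    field_simp
end
end
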